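/- arXiv:2205.14478 — 6 statements merged into one kernel-verified Lean document; each statement's English description precedes it below -/
import Mathlib

section
/- Let C be a nonempty finite set, N a positive integer, T ≤ N a threshold, B ⊆ C, and x ∈ C. If h is chosen uniformly at random from the set of all functions C → {1,…,N}, then the probability that h(x) ≤ T and there exists x' ∈ B \ {x} with h(x') = h(x) equals (T/N)·(1 − (1 − 1/N)^{|B \ {x}|}). -/
theorem aux4 {C : Type*} [Fintype C] [DecidableEq C]
    (N : ℕ) (hN : 0 < N) (S : Finset C) (x : C) (hx : x ∉ S) (v : Fin N) :
    ((Finset.univ.filter fun h : C → Fin N => h x = v ∧ ∀ c ∈ S, h c ≠ v).card : ℝ)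
      = (N : ℝ) ^ Fintype.card C * ((1 / N) * (1 - 1 / (N : ℝ)) ^ S.card) := by
  have hN' : (N : ℝ) ≠ 0 := by positivity
  have h1 : (Finset.univ.filter fun h : C → Fin N => h x = v ∧ ∀ c ∈ S, h c ≠ v)
      = Fintype.piFinset (fun c => if c = x then ({v} : Finset (Fin N)) else
          if c ∈ S then {v}ᶜ else Finset.univ) := by
    ext h
    simp only [Finset.mem_filter, Finset.mem_univ, true_and, Fintype.mem_piFinset]
    constructor
    · rintro ⟨h1, h2⟩ c
      split_ifs with a b
      · subst a; simpa using h1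
      · simpa using h2 c b
      · simp
    · intro H
      refine ⟨by simpa using H x, fun c hc => ?_⟩
      have hcx : c ≠ x := fun e => hx (e ▸ hc)
      simpa [hcx, hc] using H c
  have h2 : ∀ c, (((if c = x then ({v} : Finset (Fin N)) else
          if c ∈ S then {v}ᶜ else Finset.univ).card : ℕ) : ℝ)
      = N * ((if c = x then 1 / (N : ℝ) else 1) * (if c ∈ S then (1 - 1 / (N : ℝ)) else 1)) := by
    intro c
    by_cases a : c = x
    · subst a; simp [hx, hN']
    · by_cases b : c ∈ S
      · simp only [a, b, if_true, if_false, Finset.card_compl, Finset.card_singleton,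
          Fintype.card_fin]
        rw [Nat.cast_sub (by omega)]
        field_simp
        simp
      · simp [a, b]
  rw [h1, Fintype.card_piFinset, Nat.cast_prod, Finset.prod_congr rfl (fun c _ => h2 c),
    Finset.prod_mul_distrib, Finset.prod_mul_distrib]
  simp [Finset.prod_ite_mem, Finset.prod_ite_eq']

/-- For a uniformly random function `h : C → {1,…,N}` (encoded as `h : C → Fin N`, the
value `(h c : ℕ) + 1` ranging over `{1,…,N}`), the probability that `h(x) ≤ T` and some
`x' ∈ B \ {x}` satisfies `h(x') = h(x)` equals `(T/N)·(1 − (1 − 1/N)^{|B \ {x}|})`. -/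
theorem stmt4 {C : Type*} [Fintype C] [DecidableEq C] [Nonempty C]
    (N T : ℕ) (hN : 0 < N) (hTN : T ≤ N) (B : Finset C) (x : C) :
    ((Finset.univ.filter fun h : C → Fin N =>
        (h x : ℕ) < T ∧ ∃ x' ∈ B.erase x, h x' = h x).card : ℝ)
      / ((N : ℝ) ^ Fintype.card C)
      = ((T : ℝ) / N) * (1 - (1 - 1 / (N : ℝ)) ^ (B.erase x).card) := by
  have hN' : (N : ℝ) ≠ 0 := by positivity
  have hx : x ∉ B.erase x := Finset.notMem_erase x B
  generalize B.erase x = S at hx ⊢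
  have key : ∀ v : Fin N, ((Finset.univ.filter fun h : C → Fin N =>
      h x = v ∧ ∃ c ∈ S, h c = v).card : ℝ)
      = (N : ℝ) ^ Fintype.card C * ((1 / N) * (1 - (1 - 1 / (N : ℝ)) ^ S.card)) := by
    intro v
    have e1 := aux4 N hN S x hx v
    have e2 := aux4 N hN ∅ x (by simp) v
    have e3 : (Finset.univ.filter fun h : C → Fin N => h x = v ∧ ∃ c ∈ S, h c = v).card
        + (Finset.univ.filter fun h : C → Fin N => h x = v ∧ ∀ c ∈ S, h c ≠ v).card
        = (Finset.univ.filter fun h : C → Fin N =>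
            h x = v ∧ ∀ c ∈ (∅ : Finset C), h c ≠ v).card := by
      rw [← Finset.card_union_of_disjoint]
      · congr 1
        ext h
        simp only [Finset.mem_union, Finset.mem_filter, Finset.mem_univ, true_and]
        by_cases q : ∃ c ∈ S, h c = v
        · simp [q]
        · have : ∀ c ∈ S, h c ≠ v := fun c hc e => q ⟨c, hc, e⟩
          simp only [Finset.notMem_empty, false_imp_iff, implies_true]
          tauto
      · rw [Finset.disjoint_filter]
        rintro h _ ⟨_, c, hc, e⟩ ⟨_, g⟩
        exact g c hc e
    have e4 := congrArg (Nat.cast : ℕ → ℝ) e3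
    rw [Nat.cast_add, e1, e2] at e4
    simp only [Finset.card_empty, pow_zero] at e4
    linear_combination e4
  have hs : (Finset.univ.filter fun h : C → Fin N => (h x : ℕ) < T ∧ ∃ x' ∈ S, h x' = h x).card
      = ∑ v ∈ Finset.univ.filter (fun v : Fin N => (v : ℕ) < T),
        (Finset.univ.filter fun h : C → Fin N => h x = v ∧ ∃ c ∈ S, h c = v).card := by
    rw [Finset.card_eq_sum_card_fiberwise (f := fun h : C → Fin N => h x)
      (t := Finset.univ.filter (fun v : Fin N => (v : ℕ) < T))]
    · refine Finset.sum_congr rfl fun v hv => ?_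
      congr 1
      ext h
      simp only [Finset.mem_filter, Finset.mem_univ, true_and] at hv ⊢
      constructor
      · rintro ⟨⟨_, b⟩, rfl⟩
        exact ⟨rfl, b⟩
      · rintro ⟨rfl, b⟩
        exact ⟨⟨hv, b⟩, rfl⟩
    · intro h hh
      simp at hh ⊢
      exact hh.1
  have hc : (Finset.univ.filter (fun v : Fin N => (v : ℕ) < T)).card = T := by
    rw [Fin.card_filter_val_lt]
    omega
  rw [hs, Nat.cast_sum, Finset.sum_congr rfl (fun v _ => key v), Finset.sum_const, hc,
    nsmul_eq_mul]
  field_simp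
end

section
/- Let C be a finite set, let α, β, ν ∈ (0,1) with α ≤ β, and let N, T be positive integers with T ≤ N and T ≥ max(3·β⁻²·α⁻¹·ln(8/ν), 45·α⁻¹·β⁻¹·ln(12/ν)). Then for every pair of subsets A, B ⊆ C with |A| ≤ βN and |B| ≤ βN, a uniformly random function h : C → {1,…,N} is (A,B)-good with probability at least 1 − ν/2. -/
open scoped Classical

/-- `A|_h^{≤T}` for a hash function `h : C → {1,…,N}` encoded as `h : C → Fin N`
(the value `(h c : ℕ) + 1` ranges over `{1,…,N}`, and lands in `{1,…,T}` iff
`(h c : ℕ) < T`). -/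
def lowF {C : Type*} [DecidableEq C] {N : ℕ} (T : ℕ) (A : Finset C) (h : C → Fin N) :
    Finset C :=
  A.filter fun c => (h c : ℕ) < T

/-- `Coll^{≤T}(A,h,B)`: elements of `A` hashing to a value in `{1,…,T}` that collide with
a distinct element of `B`. -/
def collF {C : Type*} [DecidableEq C] {N : ℕ} (T : ℕ) (A B : Finset C) (h : C → Fin N) :
    Finset C :=
  A.filter fun c => (h c : ℕ) < T ∧ ∃ b ∈ B.erase c, h b = h c

/-- `h` is `(A,B)`-good for parameters `a = α`, `b = β` and threshold `T`. -/
def IsGood {C : Type*} [DecidableEq C] {N : ℕ} (a b : ℝ) (T : ℕ) (A B : Finset C)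
    (h : C → Fin N) : Prop :=
  (a * N ≤ (A.card : ℝ) →
    ((1 - b) * T * A.card / N ≤ ((lowF T A h).card : ℝ) ∧
      ((lowF T A h).card : ℝ) ≤ (1 + b) * T * A.card / N) ∧
    ((collF T A B h).card : ℝ) ≤ 2 * b * T * A.card / N) ∧
  ((A.card : ℝ) < a * N →
    ((lowF T A h).card : ℝ) ≤ (1 + b) * T * a ∧
    ((collF T A B h).card : ℝ) ≤ 2 * T * a * b)

lemma sum_update_aux {C V : Type*} [Fintype C] [DecidableEq C] [DecidableEq V]
    (W : C → Finset V) (c : C) (F : (C → V) → ℝ) :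
    (∑ h ∈ Fintype.piFinset W, F h) * ((W c).card : ℝ)
      = ∑ h ∈ Fintype.piFinset W, ∑ v ∈ W c, F (Function.update h c v) := by
  rw [← Finset.sum_product']
  have : (∑ h ∈ Fintype.piFinset W, F h) * ((W c).card : ℝ)
      = ∑ p ∈ Fintype.piFinset W ×ˢ W c, F p.1 := by
    rw [Finset.sum_product, Finset.sum_mul]
    refine Finset.sum_congr rfl fun h _ => ?_
    simp [mul_comm]
  rw [this]
  have key : ∀ p ∈ Fintype.piFinset W ×ˢ W c,
      (Function.update p.1 c p.2, p.1 c) ∈ Fintype.piFinset W ×ˢ W c := by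
    intro p hp
    rw [Finset.mem_product, Fintype.mem_piFinset] at hp ⊢
    refine ⟨fun x => ?_, hp.1 c⟩
    by_cases hx : x = c
    · subst hx; simpa using hp.2
    · simpa [hx] using hp.1 x
  refine Finset.sum_nbij' (fun p => (Function.update p.1 c p.2, p.1 c))
    (fun p => (Function.update p.1 c p.2, p.1 c)) key key ?_ ?_ ?_
  · intro p _; simp
  · intro p _; simp
  · intro p _; simp

/-- elements of `s` colliding with an earlier element of `B` -/
noncomputable def earlyC {C V : Type*} [DecidableEq C] [DecidableEq V] (r : C → ℤ) (s B : Finset C) (h : C → V) : Finset C :=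
  s.filter fun c => ∃ b ∈ B, r b < r c ∧ h b = h c

lemma mgf_early {C V : Type*} [Fintype C] [DecidableEq C] [DecidableEq V]
    (W : C → Finset V) (T : ℕ) (hT : 0 < T) (r : C → ℤ) (θ : ℝ) (hθ : 0 ≤ θ)
    (B s : Finset C) (hW : ∀ c ∈ s, (W c).card = T) :
    ∑ h ∈ Fintype.piFinset W, Real.exp (θ * (earlyC r s B h).card)
      ≤ (Fintype.piFinset W).card * Real.exp ((Real.exp θ - 1) / T *
          ∑ c ∈ s, ((B.filter fun b => r b < r c).card : ℝ)) := by
  induction s using Finset.induction_on_max_value r with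
  | empty => simp [earlyC]
  | insert a s has hmax ih =>
    have ih' := ih (fun c hc => hW c (Finset.mem_insert_of_mem hc))
    have hTa := hW a (Finset.mem_insert_self _ _)
    have hT' : (0:ℝ) < T := by exact_mod_cast hT
    set n : ℝ := ((B.filter fun b => r b < r a).card : ℝ) with hn
    have hn0 : 0 ≤ n := by positivity
    have he : 0 ≤ Real.exp θ - 1 := by
      have := Real.one_le_exp hθ; linarith
    -- inner bound
    have inner : ∀ h : C → V, ∑ v ∈ W a,
        Real.exp (θ * (earlyC r (insert a s) B (Function.update h a v)).card)
          ≤ Real.exp (θ * (earlyC r s B h).card) * (T + (Real.exp θ - 1) * n) := by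
      intro h
      have h1 : ∀ v ∈ W a,
          Real.exp (θ * (earlyC r (insert a s) B (Function.update h a v)).card)
          ≤ Real.exp (θ * (earlyC r s B h).card) *
            (1 + (Real.exp θ - 1) * (if v ∈ (B.filter fun b => r b < r a).image h then 1 else 0)) := by
        intro v _
        have hs : earlyC r s B (Function.update h a v) = earlyC r s B h := by
          unfold earlyC
          refine Finset.filter_congr fun c hc => ?_
          have hca : c ≠ a := fun e => has (e ▸ hc)
          refine exists_congr fun b => and_congr_right fun _ => and_congr_right fun hb => ?_
          have hba : b ≠ a := by
            rintro rfl
            exact absurd (hmax c hc) (not_le.mpr hb)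
          rw [Function.update_of_ne hca, Function.update_of_ne hba]
        have hins : earlyC r (insert a s) B (Function.update h a v) =
            if v ∈ (B.filter fun b => r b < r a).image h then insert a (earlyC r s B h)
              else earlyC r s B h := by
          rw [← hs]
          unfold earlyC
          rw [Finset.filter_insert]
          refine if_congr ?_ rfl rfl
          rw [Finset.mem_image]
          constructor
          · rintro ⟨b, hb, hr, e⟩
            refine ⟨b, Finset.mem_filter.2 ⟨hb, hr⟩, ?_⟩
            have hba : b ≠ a := by rintro rfl; exact lt_irrefl _ hr
            simpa [hba] using e
          · rintro ⟨b, hb, e⟩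
            obtain ⟨hb, hr⟩ := Finset.mem_filter.1 hb
            have hba : b ≠ a := by rintro rfl; exact lt_irrefl _ hr
            exact ⟨b, hb, hr, by simpa [hba] using e⟩
        rw [hins]
        split_ifs
        · rw [Finset.card_insert_of_notMem (show a ∉ earlyC r s B h from fun hh => has (Finset.mem_filter.1 hh).1)]
          push_cast
          rw [mul_add, Real.exp_add]
          apply le_of_eq; ring_nf
        · simp
      refine (Finset.sum_le_sum h1).trans ?_
      rw [← Finset.mul_sum, Finset.sum_add_distrib, ← Finset.mul_sum]
      refine mul_le_mul_of_nonneg_left ?_ (Real.exp_pos _).le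
      have h2 : ∑ v ∈ W a, (if v ∈ (B.filter fun b => r b < r a).image h then (1:ℝ) else 0) ≤ n := by
        rw [Finset.sum_boole, hn]
        norm_cast
        refine le_trans (Finset.card_le_card ?_) (Finset.card_image_le (f := h))
        intro v hv
        exact (Finset.mem_filter.1 hv).2
      have h3 : ∑ v ∈ W a, (1:ℝ) = T := by simp [hTa]
      rw [h3]
      have := mul_le_mul_of_nonneg_left h2 he
      linarith
    have up := sum_update_aux W a (fun h => Real.exp (θ * (earlyC r (insert a s) B h).card))
    rw [hTa] at up
    have h4 := Finset.sum_le_sum (s := Fintype.piFinset W) (fun h _ => inner h)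
    rw [← up, ← Finset.sum_mul] at h4
    rw [Finset.sum_insert has]
    have h5 : T + (Real.exp θ - 1) * n ≤ T * Real.exp ((Real.exp θ - 1) / T * n) := by
      have := Real.add_one_le_exp ((Real.exp θ - 1) / T * n)
      calc (T:ℝ) + (Real.exp θ - 1) * n = T * ((Real.exp θ - 1) / T * n + 1) := by field_simp; ring
        _ ≤ _ := mul_le_mul_of_nonneg_left this hT'.le
    rw [mul_add, Real.exp_add]
    have h6 := mul_le_mul ih' h5 (by positivity) (by positivity)
    refine le_of_mul_le_mul_right (h4.trans (h6.trans (le_of_eq ?_))) hT'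
    ring

lemma mgf_low {C : Type*} [Fintype C] [DecidableEq C] {N : ℕ} (T : ℕ) (hN : 0 < N) (hTN : T ≤ N)
    (A : Finset C) (θ : ℝ) :
    ∑ h : C → Fin N, Real.exp (θ * (lowF T A h).card)
      ≤ (N:ℝ) ^ Fintype.card C * Real.exp ((Real.exp θ - 1) * (T * A.card / N)) := by
  have hN' : (0:ℝ) < N := by exact_mod_cast hN
  have h1 : ∀ h : C → Fin N, Real.exp (θ * (lowF T A h).card)
      = ∏ c, (if c ∈ A ∧ (h c : ℕ) < T then Real.exp θ else 1) := by
    intro h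
    rw [Finset.prod_ite, Finset.prod_const, Finset.prod_const_one, mul_one, ← Real.exp_nat_mul,
      mul_comm]
    congr 3
    unfold lowF
    congr 1
    ext c; simp
  simp_rw [h1]
  have h2 := Finset.prod_univ_sum (fun _ : C => (Finset.univ : Finset (Fin N)))
    (fun c v => if c ∈ A ∧ (v : ℕ) < T then Real.exp θ else (1:ℝ))
  rw [Fintype.piFinset_univ] at h2
  rw [← h2]
  have hcard : (Finset.univ.filter fun v : Fin N => (v:ℕ) < T).card = T := by
    rw [Fin.card_filter_val_lt]; simp [hTN]
  have h3 : ∀ c ∈ (Finset.univ : Finset C),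
      ∑ v : Fin N, (if c ∈ A ∧ (v : ℕ) < T then Real.exp θ else (1:ℝ))
      ≤ N * (if c ∈ A then Real.exp ((Real.exp θ - 1) * (T / N)) else 1) := by
    intro c _
    by_cases hc : c ∈ A
    · have : ∀ v : Fin N, (if c ∈ A ∧ (v : ℕ) < T then Real.exp θ else (1:ℝ))
          = 1 + (Real.exp θ - 1) * (if (v:ℕ) < T then 1 else 0) := by
        intro v; simp only [hc, true_and]; split_ifs <;> ring
      simp_rw [this]
      rw [Finset.sum_add_distrib, ← Finset.mul_sum, Finset.sum_boole, hcard, if_pos hc]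
      simp only [Finset.sum_const, Finset.card_univ, Fintype.card_fin, nsmul_eq_mul, mul_one]
      have := Real.add_one_le_exp ((Real.exp θ - 1) * (T / N))
      calc (N:ℝ) + (Real.exp θ - 1) * T = N * ((Real.exp θ - 1) * (T / N) + 1) := by
            field_simp; ring
        _ ≤ _ := mul_le_mul_of_nonneg_left this hN'.le
    · simp [hc]
  refine (Finset.prod_le_prod (fun c _ => Finset.sum_nonneg fun v _ => by split_ifs <;> positivity)
    h3).trans (le_of_eq ?_)
  rw [Finset.prod_mul_distrib, Finset.prod_const, Finset.prod_ite_mem, Finset.univ_inter,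
    Finset.prod_const, ← Real.exp_nat_mul, Finset.card_univ]
  congr 2
  ring

lemma markov_aux {Ω : Type*} [DecidableEq Ω] (G U : Finset Ω) (hGU : G ⊆ U) (f : Ω → ℝ)
    (x K E : ℝ) (hf : ∀ h ∈ G, x ≤ f h)
    (hs : ∑ h ∈ U, Real.exp (f h) ≤ K * Real.exp E) :
    (G.card : ℝ) ≤ K * Real.exp (E - x) := by
  have h1 : (G.card : ℝ) * Real.exp x ≤ ∑ h ∈ U, Real.exp (f h) := by
    rw [← nsmul_eq_mul]
    refine (Finset.card_nsmul_le_sum G (fun h => Real.exp (f h)) _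
      (fun h hh => Real.exp_le_exp.2 (hf h hh))).trans ?_
    exact Finset.sum_le_sum_of_subset_of_nonneg hGU (fun _ _ _ => (Real.exp_pos _).le)
  rw [Real.exp_sub, ← mul_div_assoc, le_div_iff₀ (Real.exp_pos _)]
  exact h1.trans hs

lemma upper_tail {C : Type*} [Fintype C] [DecidableEq C] {N : ℕ} (T : ℕ) (hN : 0 < N) (hTN : T ≤ N)
    (A : Finset C) (d M : ℝ) (hd0 : 0 ≤ d) (hM : (T:ℝ) * A.card / N ≤ M) :
    ((Finset.univ.filter fun h : C → Fin N => (1 + d) * M < ((lowF T A h).card : ℝ)).card : ℝ)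
      ≤ (N:ℝ) ^ Fintype.card C * Real.exp (-(M * (d ^ 2 / (2 + d)))) := by
  have hm := mgf_low T hN hTN A (Real.log (1 + d))
  have hlog0 : 0 ≤ Real.log (1 + d) := Real.log_nonneg (by linarith)
  have := markov_aux (Finset.univ.filter fun h : C → Fin N => (1 + d) * M < ((lowF T A h).card : ℝ))
    Finset.univ (Finset.subset_univ _) (fun h => Real.log (1 + d) * (lowF T A h).card)
    (Real.log (1 + d) * ((1 + d) * M)) _ _
    (fun h hh => mul_le_mul_of_nonneg_left (Finset.mem_filter.1 hh).2.le hlog0) hm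
  refine this.trans (mul_le_mul_of_nonneg_left (Real.exp_le_exp.2 ?_) (by positivity))
  rw [Real.exp_log (by linarith)]
  have hM0 : 0 ≤ M := le_trans (by positivity) hM
  have hl := Real.le_log_one_add_of_nonneg hd0
  have h1 : (1 + d - 1) * ((T:ℝ) * A.card / N) ≤ d * M := by
    rw [add_sub_cancel_left]; exact mul_le_mul_of_nonneg_left hM hd0
  have h2 : 2 * d / (d + 2) * ((1 + d) * M) ≤ Real.log (1 + d) * ((1 + d) * M) :=
    mul_le_mul_of_nonneg_right hl (by positivity)
  have h3 : d * M - 2 * d / (d + 2) * ((1 + d) * M) = -(M * (d ^ 2 / (2 + d))) := by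
    have : d + 2 ≠ 0 := by linarith
    have : 2 + d ≠ 0 := by linarith
    field_simp; ring
  linarith

lemma lower_tail {C : Type*} [Fintype C] [DecidableEq C] {N : ℕ} (T : ℕ) (hN : 0 < N) (hTN : T ≤ N)
    (A : Finset C) (d : ℝ) (hd0 : 0 ≤ d)  :
    ((Finset.univ.filter fun h : C → Fin N =>
        ((lowF T A h).card : ℝ) < (1 - d) * ((T:ℝ) * A.card / N)).card : ℝ)
      ≤ (N:ℝ) ^ Fintype.card C * Real.exp (-(((T:ℝ) * A.card / N) * (d ^ 2 / 2))) := by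
  set M : ℝ := (T:ℝ) * A.card / N with hMdef
  have hM0 : 0 ≤ M := by positivity
  have hm := mgf_low T hN hTN A (-d)
  have := markov_aux (Finset.univ.filter fun h : C → Fin N => ((lowF T A h).card : ℝ) < (1 - d) * M)
    Finset.univ (Finset.subset_univ _) (fun h => -d * (lowF T A h).card)
    (-d * ((1 - d) * M)) _ _
    (fun h hh => mul_le_mul_of_nonpos_left (Finset.mem_filter.1 hh).2.le (by linarith)) hm
  refine this.trans (mul_le_mul_of_nonneg_left (Real.exp_le_exp.2 ?_) (by positivity))
  have hq := Real.quadratic_le_exp_of_nonneg hd0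
  have he : Real.exp (-d) ≤ 1 - d + d ^ 2 / 2 := by
    rw [Real.exp_neg]
    refine inv_le_of_inv_le₀ (by nlinarith [sq_nonneg (d - 1)]) (le_trans ?_ hq)
    rw [inv_le_iff_one_le_mul₀ (by nlinarith [sq_nonneg (d - 1)])]
    nlinarith [sq_nonneg (d ^ 2)]
  have := mul_le_mul_of_nonneg_right he hM0
  rw [← hMdef]
  nlinarith

/-- value sets for hash functions with a given low set -/
def slotV {C : Type*} [DecidableEq C] (N T : ℕ) (S : Finset C) (c : C) : Finset (Fin N) :=
  if c ∈ S then Finset.univ.filter fun v => (v:ℕ) < T else Finset.univ.filter fun v => ¬ (v:ℕ) < T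

lemma mem_slot {C : Type*} [Fintype C] [DecidableEq C] {N : ℕ} (T : ℕ) (S : Finset C)
    (h : C → Fin N) :
    h ∈ Fintype.piFinset (slotV N T S) ↔ (lowF T Finset.univ h) = S := by
  rw [Fintype.mem_piFinset, Finset.ext_iff]
  refine forall_congr' fun c => ?_
  unfold slotV lowF
  by_cases hc : c ∈ S <;> simp [hc]

lemma coll_mgf {C : Type*} [Fintype C] [DecidableEq C] {N : ℕ} (T : ℕ) (hT : 0 < T)
    (hTN : T ≤ N) (A B S : Finset C) (θ : ℝ) (hθ : 0 ≤ θ) :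
    ∑ h ∈ Fintype.piFinset (slotV N T S), Real.exp (θ * (collF T A B h).card)
      ≤ (Fintype.piFinset (slotV N T S)).card *
        Real.exp ((Real.exp (2 * θ) - 1) / T * ((A ∩ S).card * (B ∩ S).card) / 2) := by
  have hT' : (0:ℝ) < T := by exact_mod_cast hT
  set P := Fintype.piFinset (slotV N T S) with hP
  let r : C → ℤ := fun c => ((Fintype.equivFin C c : Fin _) : ℕ)
  have hr : Function.Injective r := by
    intro x y hxy
    simpa [r, Fin.val_inj] using hxy
  let r' : C → ℤ := fun c => - r c
  have hW : ∀ c ∈ A ∩ S, (slotV N T S c).card = T := by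
    intro c hc
    unfold slotV
    rw [if_pos (Finset.mem_inter.1 hc).2, Fin.card_filter_val_lt]; simp [hTN]
  have m1 := mgf_early (slotV N T S) T hT r (2 * θ) (by linarith) (B ∩ S) (A ∩ S) hW
  have m2 := mgf_early (slotV N T S) T hT r' (2 * θ) (by linarith) (B ∩ S) (A ∩ S) hW
  have hcoll : ∀ h ∈ P, (collF T A B h).card ≤
      (earlyC r (A ∩ S) (B ∩ S) h).card + (earlyC r' (A ∩ S) (B ∩ S) h).card := by
    intro h hh
    rw [hP, mem_slot, Finset.ext_iff] at hh
    have hS : ∀ c, c ∈ S ↔ (h c : ℕ) < T := fun c => by rw [← hh]; simp [lowF]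
    refine le_trans (Finset.card_le_card ?_) (Finset.card_union_le _ _)
    intro c hc
    simp only [collF, Finset.mem_filter, Finset.mem_erase] at hc
    obtain ⟨hcA, hcT, b, ⟨hbc, hbB⟩, hb⟩ := hc
    have hcS : c ∈ A ∩ S := Finset.mem_inter.2 ⟨hcA, (hS c).2 hcT⟩
    have hbS : b ∈ B ∩ S := Finset.mem_inter.2 ⟨hbB, (hS b).2 (hb ▸ hcT)⟩
    rcases lt_or_gt_of_ne (fun e => hbc (hr e) : r b ≠ r c) with hlt | hlt
    · exact Finset.mem_union_left _ (Finset.mem_filter.2 ⟨hcS, b, hbS, hlt, hb⟩)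
    · exact Finset.mem_union_right _ (Finset.mem_filter.2 ⟨hcS, b, hbS, by simpa [r'] using hlt, hb⟩)
  have hsum : ∑ c ∈ A ∩ S, (((B ∩ S).filter fun b => r b < r c).card : ℝ) +
      ∑ c ∈ A ∩ S, (((B ∩ S).filter fun b => r' b < r' c).card : ℝ)
      ≤ (A ∩ S).card * (B ∩ S).card := by
    rw [← Finset.sum_add_distrib, ← nsmul_eq_mul]
    refine Finset.sum_le_card_nsmul _ _ _ fun c _ => ?_
    norm_cast
    rw [← Finset.card_union_of_disjoint]
    · refine Finset.card_le_card (Finset.union_subset (Finset.filter_subset _ _)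
        (Finset.filter_subset _ _))
    · rw [Finset.disjoint_filter]
      intro b _ h1 h2
      simp only [r'] at h2
      linarith
  set e1 := ∑ c ∈ A ∩ S, (((B ∩ S).filter fun b => r b < r c).card : ℝ)
  set e2 := ∑ c ∈ A ∩ S, (((B ∩ S).filter fun b => r' b < r' c).card : ℝ)
  have hle : ∑ h ∈ P, Real.exp (θ * (collF T A B h).card) ≤
      ∑ h ∈ P, Real.exp (θ * (earlyC r (A ∩ S) (B ∩ S) h).card) *
        Real.exp (θ * (earlyC r' (A ∩ S) (B ∩ S) h).card) := by
    refine Finset.sum_le_sum fun h hh => ?_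
    rw [← Real.exp_add, ← mul_add]
    refine Real.exp_le_exp.2 (mul_le_mul_of_nonneg_left ?_ hθ)
    exact_mod_cast hcoll h hh
  refine hle.trans ?_
  have cs := Finset.sum_mul_sq_le_sq_mul_sq P
    (fun h => Real.exp (θ * (earlyC r (A ∩ S) (B ∩ S) h).card))
    (fun h => Real.exp (θ * (earlyC r' (A ∩ S) (B ∩ S) h).card))
  have sq : ∀ x : ℝ, Real.exp (θ * x) ^ 2 = Real.exp (2 * θ * x) := by
    intro x; rw [← Real.exp_nat_mul]; congr 1; push_cast; ring
  simp only [sq] at cs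
  refine (sq_le_sq₀ (Finset.sum_nonneg fun _ _ => by positivity) (by positivity)).1 ?_
  refine cs.trans ((mul_le_mul m1 m2 (Finset.sum_nonneg fun _ _ => (Real.exp_pos _).le)
    (by positivity)).trans ?_)
  rw [mul_pow, ← Real.exp_nat_mul]
  have : 0 ≤ (Real.exp (2 * θ) - 1) / T := by
    have := Real.one_le_exp (show 0 ≤ 2 * θ by linarith)
    exact div_nonneg (by linarith) hT'.le
  have h7 := mul_le_mul_of_nonneg_left hsum this
  calc _ = (P.card : ℝ) ^ 2 * Real.exp ((Real.exp (2 * θ) - 1) / T * (e1 + e2)) := by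
        rw [mul_add, Real.exp_add]; ring
    _ ≤ _ := by
        refine mul_le_mul_of_nonneg_left (Real.exp_le_exp.2 ?_) (by positivity)
        push_cast
        linarith

lemma coll_tail {C : Type*} [Fintype C] [DecidableEq C] {N : ℕ} (T : ℕ) (hT : 0 < T)
    (hTN : T ≤ N) (A B : Finset C) (b M : ℝ) (hb : 0 ≤ b) (hM : 0 ≤ M) :
    ((Finset.univ.filter fun h : C → Fin N => 2 * b * M < ((collF T A B h).card : ℝ) ∧
        ((lowF T A h).card : ℝ) ≤ 5 / 4 * M ∧ ((lowF T B h).card : ℝ) ≤ 5 / 4 * (b * T)).card : ℝ)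
      ≤ (N:ℝ) ^ Fintype.card C * Real.exp (-(b * M / 45)) := by
  have hT' : (0:ℝ) < T := by exact_mod_cast hT
  set θ : ℝ := Real.log (5 / 4) / 2 with hθd
  have hl := Real.le_log_one_add_of_nonneg (show (0:ℝ) ≤ 1 / 4 by norm_num)
  norm_num at hl
  have hθ : 0 ≤ θ := by linarith
  have he : Real.exp (2 * θ) = 5 / 4 := by
    rw [hθd, mul_div_cancel₀ _ (two_ne_zero), Real.exp_log (by norm_num)]
  set U := Finset.univ.filter fun h : C → Fin N =>
        ((lowF T A h).card : ℝ) ≤ 5 / 4 * M ∧ ((lowF T B h).card : ℝ) ≤ 5 / 4 * (b * T) with hU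
  have hlow : ∀ (D : Finset C) (h : C → Fin N), lowF T D h = D ∩ lowF T Finset.univ h := by
    intro D h; ext c; simp [lowF]
  have hcard : ∑ S : Finset C, ((Fintype.piFinset (slotV N T S)).card : ℝ)
      = (N:ℝ) ^ Fintype.card C := by
    have := Finset.card_eq_sum_card_fiberwise (s := (Finset.univ : Finset (C → Fin N)))
      (t := (Finset.univ : Finset (Finset C))) (f := fun h => lowF T Finset.univ h)
      (fun _ _ => by simp)
    rw [Finset.card_univ, Fintype.card_fun, Fintype.card_fin] at this
    rw [← Nat.cast_pow, this, Nat.cast_sum]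
    refine Finset.sum_congr rfl fun S _ => ?_
    congr 2
    ext h
    rw [mem_slot]; simp
  have hs : ∑ h ∈ U, Real.exp (θ * (collF T A B h).card) ≤
      (N:ℝ) ^ Fintype.card C * Real.exp (25 / 128 * (b * M)) := by
    rw [← Finset.sum_fiberwise (s := U) (g := fun h => lowF T Finset.univ h), ← hcard,
      Finset.sum_mul]
    refine Finset.sum_le_sum fun S _ => ?_
    by_cases hS : ((A ∩ S).card : ℝ) ≤ 5 / 4 * M ∧ ((B ∩ S).card : ℝ) ≤ 5 / 4 * (b * T)
    · refine le_trans (Finset.sum_le_sum_of_subset_of_nonneg ?_ fun _ _ _ => (Real.exp_pos _).le)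
        ((coll_mgf T hT hTN A B S θ hθ).trans ?_)
      · intro h hh
        rw [mem_slot]; exact (Finset.mem_filter.1 hh).2
      · refine mul_le_mul_of_nonneg_left (Real.exp_le_exp.2 ?_) (Nat.cast_nonneg _)
        rw [he]
        have := mul_le_mul hS.1 hS.2 (Nat.cast_nonneg _) (mul_nonneg (by norm_num) hM)
        calc _ = (1 / (8 * T)) * (((A ∩ S).card : ℝ) * (B ∩ S).card) := by field_simp; norm_num; try ring
          _ ≤ (1 / (8 * T)) * (5 / 4 * M * (5 / 4 * (b * T))) :=
              mul_le_mul_of_nonneg_left this (by positivity)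
          _ = _ := by field_simp; norm_num; try ring
    · rw [Finset.sum_eq_zero]
      · exact mul_nonneg (Nat.cast_nonneg _) (Real.exp_pos _).le
      · intro h hh
        obtain ⟨h1, h2⟩ := Finset.mem_filter.1 hh
        have h3 := (Finset.mem_filter.1 h1).2
        rw [hlow A, hlow B, h2] at h3
        exact absurd h3 hS
  have := markov_aux (Finset.univ.filter fun h : C → Fin N => 2 * b * M < ((collF T A B h).card : ℝ) ∧
        ((lowF T A h).card : ℝ) ≤ 5 / 4 * M ∧ ((lowF T B h).card : ℝ) ≤ 5 / 4 * (b * T)) U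
    (fun h hh => Finset.mem_filter.2 ⟨Finset.mem_univ _, (Finset.mem_filter.1 hh).2.2⟩)
    (fun h => θ * (collF T A B h).card) (θ * (2 * b * M)) _ _
    (fun h hh => mul_le_mul_of_nonneg_left (Finset.mem_filter.1 hh).2.1.le hθ) hs
  refine this.trans (mul_le_mul_of_nonneg_left (Real.exp_le_exp.2 ?_) (by positivity))
  have hbM : 0 ≤ b * M := by positivity
  have := mul_le_mul_of_nonneg_right (show 1 / 9 ≤ θ by linarith) hbM
  nlinarith

theorem stmt5 {C : Type*} [Fintype C] [DecidableEq C]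
    (a b ν : ℝ) (ha0 : 0 < a) (ha1 : a < 1) (hb0 : 0 < b) (hb1 : b < 1)
    (hν0 : 0 < ν) (hν1 : ν < 1) (hab : a ≤ b)
    (N T : ℕ) (hN : 0 < N) (hT : 0 < T) (hTN : T ≤ N)
    (hTlb : max (3 * b⁻¹ ^ 2 * a⁻¹ * Real.log (8 / ν))
        (45 * a⁻¹ * b⁻¹ * Real.log (12 / ν)) ≤ (T : ℝ))
    (A B : Finset C) (hA : (A.card : ℝ) ≤ b * N) (hB : (B.card : ℝ) ≤ b * N) :
    1 - ν / 2 ≤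
      ((Finset.univ.filter fun h : C → Fin N => IsGood a b T A B h).card : ℝ)
        / ((N : ℝ) ^ Fintype.card C) := by
  have hN' : (0:ℝ) < N := by exact_mod_cast hN
  have hT' : (0:ℝ) < T := by exact_mod_cast hT
  set K : ℝ := (N:ℝ) ^ Fintype.card C with hK
  have hK0 : 0 < K := by positivity
  set M : ℝ := max ((T:ℝ) * A.card / N) (T * a) with hMd
  have hMA : (T:ℝ) * A.card / N ≤ M := le_max_left _ _
  have hMa : (T:ℝ) * a ≤ M := le_max_right _ _
  have hM0 : 0 < M := lt_of_lt_of_le (by positivity) hMa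
  have hT1 : Real.log (8 / ν) ≤ T * a * (b ^ 2 / 3) := by
    have := (le_max_left _ _).trans hTlb
    have h2 := mul_le_mul_of_nonneg_right this (show 0 ≤ a * (b ^ 2 / 3) by positivity)
    calc _ = 3 * b⁻¹ ^ 2 * a⁻¹ * Real.log (8 / ν) * (a * (b ^ 2 / 3)) := by field_simp
      _ ≤ _ := h2
      _ = _ := by ring
  have hT2 : Real.log (12 / ν) ≤ b * (T * a) / 45 := by
    have := (le_max_right _ _).trans hTlb
    have h2 := mul_le_mul_of_nonneg_right this (show 0 ≤ a * b / 45 by positivity)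
    calc _ = 45 * a⁻¹ * b⁻¹ * Real.log (12 / ν) * (a * b / 45) := by field_simp
      _ ≤ _ := h2
      _ = _ := by ring
  have e8 : ∀ x, Real.log (8 / ν) ≤ x → K * Real.exp (-x) ≤ K * (ν / 8) := by
    intro x hx
    refine mul_le_mul_of_nonneg_left ?_ hK0.le
    calc _ ≤ Real.exp (-Real.log (8 / ν)) := Real.exp_le_exp.2 (by linarith)
      _ = _ := by rw [Real.exp_neg, Real.exp_log (by positivity), inv_div]
  have e12 : ∀ x, Real.log (12 / ν) ≤ x → K * Real.exp (-x) ≤ K * (ν / 12) := by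
    intro x hx
    refine mul_le_mul_of_nonneg_left ?_ hK0.le
    calc _ ≤ Real.exp (-Real.log (12 / ν)) := Real.exp_le_exp.2 (by linarith)
      _ = _ := by rw [Real.exp_neg, Real.exp_log (by positivity), inv_div]
  set G1 := Finset.univ.filter fun h : C → Fin N => (1 + b) * M < ((lowF T A h).card : ℝ) with hG1
  set G2 := Finset.univ.filter fun h : C → Fin N => a * N ≤ (A.card : ℝ) ∧
        ((lowF T A h).card : ℝ) < (1 - b) * ((T:ℝ) * A.card / N) with hG2
  set G3 := Finset.univ.filter fun h : C → Fin N => (1 + 1 / 4) * M < ((lowF T A h).card : ℝ) with hG3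
  set G4 := Finset.univ.filter fun h : C → Fin N =>
    (1 + 1 / 4) * (b * T) < ((lowF T B h).card : ℝ) with hG4
  set G5 := Finset.univ.filter fun h : C → Fin N => 2 * b * M < ((collF T A B h).card : ℝ) ∧
        ((lowF T A h).card : ℝ) ≤ 5 / 4 * M ∧ ((lowF T B h).card : ℝ) ≤ 5 / 4 * (b * T) with hG5
  have c1 : (G1.card : ℝ) ≤ K * (ν / 8) := by
    refine (upper_tail T hN hTN A b M hb0.le hMA).trans (e8 _ (hT1.trans ?_))
    refine mul_le_mul hMa ?_ (by positivity) hM0.le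
    exact div_le_div_of_nonneg_left (by positivity) (by linarith) (by linarith)
  have c2 : (G2.card : ℝ) ≤ K * (ν / 8) := by
    by_cases hAa : a * N ≤ (A.card : ℝ)
    · have : G2 = Finset.univ.filter fun h : C → Fin N =>
        ((lowF T A h).card : ℝ) < (1 - b) * ((T:ℝ) * A.card / N) := by
        rw [hG2]; simp [hAa]
      rw [this]
      refine (lower_tail T hN hTN A b hb0.le).trans (e8 _ (hT1.trans ?_))
      refine mul_le_mul ?_ ?_ (by positivity) (by positivity)
      · rw [le_div_iff₀ hN', mul_assoc]
        exact mul_le_mul_of_nonneg_left hAa hT'.le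
      · have := sq_nonneg b; linarith
    · have : G2 = ∅ := by rw [hG2]; simp [hAa]
      rw [this]; simp; positivity
  have hTa0 : 0 ≤ (T:ℝ) * a := by positivity
  have c3 : (G3.card : ℝ) ≤ K * (ν / 12) := by
    refine (upper_tail T hN hTN A (1 / 4) M (by norm_num) hMA).trans (e12 _ (hT2.trans ?_))
    have : b * (T * a) ≤ T * a := mul_le_of_le_one_left hTa0 hb1.le
    norm_num
    linarith
  have c4 : (G4.card : ℝ) ≤ K * (ν / 12) := by
    refine (upper_tail T hN hTN B (1 / 4) (b * T) (by norm_num) ?_).trans (e12 _ (hT2.trans ?_))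
    · rw [div_le_iff₀ hN']
      calc (T:ℝ) * B.card ≤ T * (b * N) := mul_le_mul_of_nonneg_left hB hT'.le
        _ = _ := by ring
    · have h0 : 0 ≤ b * T := by positivity
      have : b * (T * a) ≤ b * T := mul_le_mul_of_nonneg_left (mul_le_of_le_one_right hT'.le ha1.le) hb0.le
      norm_num
      linarith
  have c5 : (G5.card : ℝ) ≤ K * (ν / 12) := by
    refine (coll_tail T hT hTN A B b M hb0.le hM0.le).trans (e12 _ (hT2.trans ?_))
    have := mul_le_mul_of_nonneg_left hMa hb0.le
    linarith
  set G := Finset.univ.filter fun h : C → Fin N => IsGood a b T A B h with hG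
  have hcover : (Finset.univ : Finset (C → Fin N)) ⊆ G ∪ (G1 ∪ (G2 ∪ (G3 ∪ (G4 ∪ G5)))) := by
    intro h _
    by_contra hcon
    simp only [Finset.mem_union, not_or, hG, hG1, hG2, hG3, hG4, hG5, Finset.mem_filter,
      Finset.mem_univ, true_and, not_lt, not_and] at hcon
    obtain ⟨n0, n1, n2, n3, n4, n5⟩ := hcon
    have n6 : ((collF T A B h).card : ℝ) ≤ 2 * b * M := by
      by_contra hc
      exact n5 (not_le.1 hc) (by linarith) (by linarith)
    apply n0
    constructor
    · intro hAa
      have hMe : M = (T:ℝ) * A.card / N := by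
        rw [hMd, max_eq_left]
        rw [le_div_iff₀ hN', mul_assoc]
        exact mul_le_mul_of_nonneg_left hAa hT'.le
      have n2' := n2 hAa
      rw [hMe] at n1 n6
      refine ⟨⟨?_, ?_⟩, ?_⟩
      · refine le_trans (le_of_eq ?_) n2'; ring
      · refine n1.trans (le_of_eq ?_); ring
      · refine n6.trans (le_of_eq ?_); ring
    · intro hAa
      have hMe : M = (T:ℝ) * a := by
        rw [hMd, max_eq_right]
        rw [div_le_iff₀ hN', mul_assoc]
        exact mul_le_mul_of_nonneg_left hAa.le hT'.le
      rw [hMe] at n1 n6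
      refine ⟨?_, ?_⟩
      · refine n1.trans (le_of_eq ?_); ring
      · refine n6.trans (le_of_eq ?_); ring
  have hc := Finset.card_le_card hcover
  rw [Finset.card_univ, Fintype.card_fun, Fintype.card_fin] at hc
  have hc2 : N ^ Fintype.card C ≤ G.card + (G1.card + (G2.card + (G3.card + (G4.card + G5.card)))) := by
    refine hc.trans ((Finset.card_union_le _ _).trans (Nat.add_le_add_left ?_ _))
    refine (Finset.card_union_le _ _).trans (Nat.add_le_add_left ?_ _)
    refine (Finset.card_union_le _ _).trans (Nat.add_le_add_left ?_ _)
    refine (Finset.card_union_le _ _).trans (Nat.add_le_add_left ?_ _)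
    exact Finset.card_union_le _ _
  have hc3 : K ≤ G.card + (G1.card + (G2.card + (G3.card + (G4.card + (G5.card : ℝ))))) := by
    rw [hK]; exact_mod_cast hc2
  rw [le_div_iff₀ hK0]
  linarith
end

section
/- Let C be a finite set with |C| ≥ 2, let α, β, ν ∈ (0,1) with α ≤ β, and let N, T be positive integers with T ≤ N and T ≥ max(3·β⁻²·α⁻¹·ln(8/ν), 45·α⁻¹·β⁻¹·ln(12/ν)). Then for every integer F > 24·β·N·ln|C|/ν there exists a family of F functions h₁,…,h_F : C → {1,…,N} such that for every pair of subsets A, B ⊆ C with |A| ≤ βN and |B| ≤ βN, at least (1−ν)·F of the functions h₁,…,h_F are (A,B)-good. -/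
open scoped Classical

section Helpers

theorem rf_resample {ι Ω : Type*} [Fintype ι] [DecidableEq ι] [Fintype Ω] (x : ι)
    (f : (ι → Ω) → ℝ) :
    ∑ h : ι → Ω, ∑ v : Ω, f (Function.update h x v) = (Fintype.card Ω : ℝ) * ∑ h : ι → Ω, f h := by
  have h1 : ∑ h : ι → Ω, ∑ v : Ω, f (Function.update h x v)
      = ∑ p : (ι → Ω) × Ω, f (Function.update p.1 x p.2) := by
    rw [Fintype.sum_prod_type]
  have hinv : Function.Involutive
      (fun p : (ι → Ω) × Ω => ((Function.update p.1 x p.2, p.1 x) : (ι → Ω) × Ω)) := by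
    rintro ⟨h, v⟩
    simp
  rw [h1, ← Equiv.sum_comp hinv.toPerm]
  simp [Function.Involutive.toPerm, Fintype.sum_prod_type, Finset.mul_sum]

theorem rf_mgf {ι Ω : Type*} [Fintype ι] [DecidableEq ι] [Fintype Ω] [DecidableEq Ω] [Nonempty Ω]
    (S : Finset Ω) (t : ℝ) (A : Finset ι) :
    ∑ h : ι → Ω, Real.exp (t * ((A.filter fun c => h c ∈ S).card : ℝ)) ≤
      (Fintype.card (ι → Ω) : ℝ) *
        Real.exp ((A.card : ℝ) * (S.card / Fintype.card Ω) * (Real.exp t - 1)) := by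
  have hΩ : (0 : ℝ) < Fintype.card Ω := by exact_mod_cast Fintype.card_pos
  induction A using Finset.induction_on with
  | empty => simp
  | insert x A hx ih =>
    refine le_of_mul_le_mul_left ?_ hΩ
    rw [← rf_resample x]
    have key : ∀ h : ι → Ω, ∑ v : Ω, Real.exp (t *
        (((insert x A).filter fun c => Function.update h x v c ∈ S).card : ℝ))
        = Real.exp (t * ((A.filter fun c => h c ∈ S).card : ℝ)) *
          (Fintype.card Ω + S.card * (Real.exp t - 1)) := by
      intro h
      have e1 : ∀ v : Ω, Real.exp (t *
        (((insert x A).filter fun c => Function.update h x v c ∈ S).card : ℝ))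
        = Real.exp (t * ((A.filter fun c => h c ∈ S).card : ℝ)) *
          (1 + if v ∈ S then (Real.exp t - 1) else 0) := by
        intro v
        have e2 : (A.filter fun c => Function.update h x v c ∈ S) = A.filter fun c => h c ∈ S := by
          apply Finset.filter_congr
          intro c hc
          have : c ≠ x := by rintro rfl; exact hx hc
          simp [Function.update_of_ne this]
        rw [Finset.filter_insert, Function.update_self, e2]
        by_cases hv : v ∈ S
        · rw [if_pos hv, if_pos hv, Finset.card_insert_of_notMem (by simp [hx])]
          push_cast
          rw [mul_add, Real.exp_add]; ring_nf
        · rw [if_neg hv, if_neg hv]; ring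
      simp_rw [e1]
      rw [← Finset.mul_sum, Finset.sum_add_distrib]
      simp [Finset.sum_ite_mem]
      ring
    simp_rw [key]
    rw [← Finset.sum_mul, Finset.card_insert_of_notMem hx]
    have h2 : (Fintype.card Ω + S.card * (Real.exp t - 1) : ℝ) ≤
        Fintype.card Ω * Real.exp ((S.card / Fintype.card Ω : ℝ) * (Real.exp t - 1)) := by
      have := Real.add_one_le_exp ((S.card / Fintype.card Ω : ℝ) * (Real.exp t - 1))
      calc (Fintype.card Ω + S.card * (Real.exp t - 1) : ℝ)
          = Fintype.card Ω * ((S.card / Fintype.card Ω : ℝ) * (Real.exp t - 1) + 1) := by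
            field_simp; ring
        _ ≤ _ := by gcongr
    have h3 : (0:ℝ) ≤ ∑ h : ι → Ω, Real.exp (t * ((A.filter fun c => h c ∈ S).card : ℝ)) :=
      Finset.sum_nonneg fun _ _ => (Real.exp_pos _).le
    calc _ ≤ (∑ h : ι → Ω, Real.exp (t * ((A.filter fun c => h c ∈ S).card : ℝ))) *
          (Fintype.card Ω * Real.exp ((S.card / Fintype.card Ω : ℝ) * (Real.exp t - 1))) := by
          gcongr
      _ ≤ ((Fintype.card (ι → Ω) : ℝ) *
        Real.exp ((A.card : ℝ) * (S.card / Fintype.card Ω) * (Real.exp t - 1))) *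
          (Fintype.card Ω * Real.exp ((S.card / Fintype.card Ω : ℝ) * (Real.exp t - 1))) := by
          gcongr
      _ = _ := by
          push_cast
          rw [show ((A.card : ℝ) + 1) * (S.card / Fintype.card Ω) * (Real.exp t - 1) =
            (A.card : ℝ) * (S.card / Fintype.card Ω) * (Real.exp t - 1) +
            (S.card / Fintype.card Ω : ℝ) * (Real.exp t - 1) by ring, Real.exp_add]
          ring

theorem rf_markov {X : Type*} [Fintype X] (P : X → Prop) [DecidablePred P] (f : X → ℝ) (c R : ℝ)
    (hR : ∑ h, Real.exp (f h) ≤ R) (hP : ∀ h, P h → c ≤ f h) :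
    ((Finset.univ.filter P).card : ℝ) ≤ R * Real.exp (-c) := by
  have h1 : ((Finset.univ.filter P).card : ℝ) * Real.exp c ≤ R := by
    calc ((Finset.univ.filter P).card : ℝ) * Real.exp c
        = ∑ h ∈ Finset.univ.filter P, Real.exp c := by simp
      _ ≤ ∑ h ∈ Finset.univ.filter P, Real.exp (f h) := by
          apply Finset.sum_le_sum
          intro h hh
          exact Real.exp_le_exp.2 (hP h (Finset.mem_filter.1 hh).2)
      _ ≤ ∑ h, Real.exp (f h) :=
          Finset.sum_le_sum_of_subset_of_nonneg (Finset.filter_subset _ _)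
            fun _ _ _ => (Real.exp_pos _).le
      _ ≤ R := hR
  rw [Real.exp_neg, ← div_eq_mul_inv, le_div_iff₀ (Real.exp_pos _)]
  exact h1

theorem rf_upper {ι Ω : Type*} [Fintype ι] [DecidableEq ι] [Fintype Ω] [DecidableEq Ω] [Nonempty Ω]
    (S : Finset Ω) (A : Finset ι) (M d : ℝ) (hd : 0 < d)
    (hM : (A.card : ℝ) * (S.card / Fintype.card Ω) ≤ M) :
    ((Finset.univ.filter fun h : ι → Ω =>
      (1 + d) * M < ((A.filter fun c => h c ∈ S).card : ℝ)).card : ℝ) ≤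
      (Fintype.card (ι → Ω) : ℝ) * Real.exp (-(d ^ 2 / (d + 2) * M)) := by
  have hM0 : 0 ≤ M := le_trans (by positivity) hM
  have hl0 : 0 ≤ Real.log (1 + d) := Real.log_nonneg (by linarith)
  have h1 := rf_markov (fun h : ι → Ω =>
      (1 + d) * M < ((A.filter fun c => h c ∈ S).card : ℝ)) _ (Real.log (1 + d) * ((1 + d) * M)) _
      (rf_mgf S (Real.log (1 + d)) A) (fun h hh => by gcongr)
  refine h1.trans ?_
  rw [mul_assoc, ← Real.exp_add, Real.exp_log (by linarith)]
  gcongr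
  have h2 := Real.le_log_one_add_of_nonneg hd.le
  have h3 : d ^ 2 / (d + 2) = (1 + d) * (2 * d / (d + 2)) - d := by field_simp; ring
  rw [h3]
  have h4 : (1 + d) * M * (2 * d / (d + 2)) ≤ (1 + d) * M * Real.log (1 + d) := by gcongr
  have h5 := mul_le_mul_of_nonneg_right hM hd.le
  ring_nf at h4 h5 ⊢
  linarith

theorem rf_lower {ι Ω : Type*} [Fintype ι] [DecidableEq ι] [Fintype Ω] [DecidableEq Ω] [Nonempty Ω]
    (S : Finset Ω) (A : Finset ι) (M d : ℝ) (hd : 0 < d)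
    (hM : (A.card : ℝ) * (S.card / Fintype.card Ω) = M) :
    ((Finset.univ.filter fun h : ι → Ω =>
      ((A.filter fun c => h c ∈ S).card : ℝ) < (1 - d) * M).card : ℝ) ≤
      (Fintype.card (ι → Ω) : ℝ) * Real.exp (-(d ^ 2 / 3 * M)) := by
  have hM0 : 0 ≤ M := le_trans (by positivity) hM.le
  have h1 := rf_markov (fun h : ι → Ω =>
      ((A.filter fun c => h c ∈ S).card : ℝ) < (1 - d) * M) _ (-d * ((1 - d) * M)) _
      (rf_mgf S (-d) A) (fun h hh => by nlinarith)
  refine h1.trans ?_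
  rw [mul_assoc, ← Real.exp_add, hM]
  gcongr
  have h2 := Real.quadratic_le_exp_of_nonneg hd.le
  have h3 : Real.exp (-d) ≤ 1 - d + d ^ 2 / 2 := by
    rw [Real.exp_neg]
    have hp : 0 < 1 - d + d ^ 2 / 2 := by nlinarith [sq_nonneg (d - 1)]
    rw [inv_le_iff_one_le_mul₀ (Real.exp_pos _)]
    nlinarith [mul_le_mul_of_nonneg_left h2 hp.le, sq_nonneg (d ^ 2)]
  have h4 := mul_le_mul_of_nonneg_left h3 hM0
  nlinarith [mul_nonneg hM0 (sq_nonneg d)]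

theorem rf_lowcard (N T : ℕ) (hTN : T ≤ N) :
    (Finset.univ.filter fun v : Fin N => (v : ℕ) < T).card = T := by
  simp [Fin.card_filter_val_lt, hTN]

theorem rf_step {C : Type*} [Fintype C] [DecidableEq C] {N T : ℕ} (hT : 0 < T) (hTN : T ≤ N)
    (S : Finset C) (x : C) (hx : x ∉ S) (f g : (C → Fin N) → ℝ) (k p : ℝ)
    (hk : Real.exp k - 1 ≤ p) (hk0 : 0 ≤ k) (hg0 : ∀ h, 0 ≤ g h)
    (hg : ∀ h v, g (Function.update h x v) = g h)
    (hfg : ∀ h, f h ≤ g h * (if (h x : ℕ) < T then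
      Real.exp ((if ∃ s ∈ S, h s = h x then k else 0) - p * (lowF T S h).card / T) else 1)) :
    ∑ h, f h ≤ ∑ h, g h := by
  have hT' : (0:ℝ) < T := by exact_mod_cast hT
  have hN' : (0:ℝ) < (Fintype.card (Fin N) : ℝ) := by
    simp; omega
  have hp : 0 ≤ p := le_trans (by linarith [Real.add_one_le_exp k]) hk
  refine (Finset.sum_le_sum fun h _ => hfg h).trans ?_
  refine le_of_mul_le_mul_left ?_ hN'
  rw [← rf_resample x, Finset.mul_sum]
  apply Finset.sum_le_sum
  intro h _
  simp_rw [hg, Function.update_self]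
  rw [← Finset.mul_sum, mul_comm]
  refine mul_le_mul_of_nonneg_right ?_ (hg0 h)
  have hne : ∀ v, ∀ s ∈ S, Function.update h x v s = h s := by
    intro v s hs
    exact Function.update_of_ne (by rintro rfl; exact hx hs) _ _
  have hlow : ∀ v, lowF T S (Function.update h x v) = lowF T S h := by
    intro v
    apply Finset.filter_congr
    intro c hc
    rw [hne v c hc]
  set q : ℝ := ((lowF T S h).card : ℝ) with hq
  set z : ℝ := Real.exp (-(p * q / T)) with hz
  have hz0 : 0 < z := Real.exp_pos _
  set I : Finset (Fin N) := (lowF T S h).image h with hI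
  have hIq : (I.card : ℝ) ≤ q := by
    rw [hI, hq]; exact_mod_cast Finset.card_image_le
  have hterm : ∀ v : Fin N, (if (v : ℕ) < T then
      Real.exp ((if ∃ s ∈ S, Function.update h x v s = v then k else 0)
        - p * (lowF T S (Function.update h x v)).card / T) else 1) ≤
      1 + (if (v : ℕ) < T then z - 1 else 0) + (if v ∈ I then z * p else 0) := by
    intro v
    rw [hlow, ← hq]
    by_cases hv : (v : ℕ) < T
    · rw [if_pos hv, if_pos hv]
      by_cases hs : ∃ s ∈ S, Function.update h x v s = v
      · have hvI : v ∈ I := by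
          obtain ⟨s, hs, e⟩ := hs
          rw [hne v s hs] at e
          rw [hI, Finset.mem_image]
          exact ⟨s, Finset.mem_filter.2 ⟨hs, by rw [e]; exact hv⟩, e⟩
        rw [if_pos hs, if_pos hvI, sub_eq_add_neg, Real.exp_add]
        nlinarith
      · rw [if_neg hs, zero_sub]
        have : 0 ≤ (if v ∈ I then z * p else 0) := by split_ifs <;> positivity
        linarith
    · rw [if_neg hv, if_neg hv]
      have : 0 ≤ (if v ∈ I then z * p else 0) := by split_ifs <;> positivity
      linarith
  refine (Finset.sum_le_sum fun v _ => hterm v).trans ?_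
  rw [Finset.sum_add_distrib, Finset.sum_add_distrib, ← Finset.sum_filter, ← Finset.sum_filter,
    Finset.sum_const, Finset.sum_const, Finset.sum_const, rf_lowcard N T hTN]
  have hI2 : (Finset.univ.filter fun v => v ∈ I) = I := by ext; simp
  rw [hI2]
  simp only [nsmul_eq_mul, Finset.card_univ]
  have h1 : (p * q / T + 1) * z ≤ 1 := by
    calc (p * q / T + 1) * z ≤ Real.exp (p * q / T) * z := by
          gcongr; exact Real.add_one_le_exp _
      _ = 1 := by rw [hz, ← Real.exp_add]; simp
  have h2 : (p * q + T) * z ≤ T := by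
    have : (p * q + T) * z = T * ((p * q / T + 1) * z) := by field_simp
    rw [this]; nlinarith
  have h3 : I.card * (z * p) ≤ q * (z * p) := by gcongr
  nlinarith

end Helpers

section Coll

theorem rf_low_update {C : Type*} [DecidableEq C] {N T : ℕ} (A : Finset C) (x : C) (hx : x ∉ A)
    (h : C → Fin N) (v : Fin N) : lowF T A (Function.update h x v) = lowF T A h := by
  apply Finset.filter_congr
  intro c hc
  rw [Function.update_of_ne (by rintro rfl; exact hx hc)]

theorem rf_coll_update {C : Type*} [DecidableEq C] {N T : ℕ} (A B : Finset C) (x : C) (hx : x ∉ A)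
    (hxB : x ∉ B) (h : C → Fin N) (v : Fin N) :
    collF T A B (Function.update h x v) = collF T A B h := by
  have e : ∀ b ∈ B, Function.update h x v b = h b := fun b hb =>
    Function.update_of_ne (by rintro rfl; exact hxB hb) _ _
  ext c
  simp only [collF, Finset.mem_filter, Finset.mem_erase]
  constructor
  · rintro ⟨hc, h1, b, hb, h2⟩
    have hcx : c ≠ x := by rintro rfl; exact hx hc
    rw [e b hb.2, Function.update_of_ne hcx] at h2
    rw [Function.update_of_ne hcx] at h1
    exact ⟨hc, h1, b, hb, h2⟩
  · rintro ⟨hc, h1, b, hb, h2⟩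
    rw [Function.update_of_ne (by rintro rfl; exact hx hc)]
    exact ⟨hc, h1, b, hb, by rw [e b hb.2]; exact h2⟩

theorem rf_low_insert {C : Type*} [DecidableEq C] {N T : ℕ} (A : Finset C) (x : C) (hx : x ∉ A)
    (h : C → Fin N) : (lowF T (insert x A) h).card =
      (lowF T A h).card + if (h x : ℕ) < T then 1 else 0 := by
  unfold lowF
  rw [Finset.filter_insert]
  split_ifs with h1
  · rw [Finset.card_insert_of_notMem (by simp [hx])]
  · rfl

noncomputable def rfPhi {C : Type*} [DecidableEq C] {N : ℕ} (l θ : ℝ) (T : ℕ) (A B : Finset C)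
    (h : C → Fin N) : ℝ :=
  Real.exp (l * (collF T A B h).card - θ * ((lowF T A h).card * (lowF T B h).card) / T)

theorem rf_step2 {C : Type*} [Fintype C] [DecidableEq C] {N T : ℕ} (hT : 0 < T) (hTN : T ≤ N)
    (l θ : ℝ) (hl : 0 ≤ l) (hθ : 0 ≤ θ) (m : ℕ) (hm : Real.exp (m * l) - 1 ≤ m * θ)
    (A B A' B' S : Finset C) (x : C) (hxA : x ∉ A) (hxB : x ∉ B) (hxS : x ∉ S)
    (hcoll : ∀ h : C → Fin N, (collF T A' B' h).card ≤ (collF T A B h).card +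
      if (h x : ℕ) < T ∧ ∃ s ∈ S, h s = h x then m else 0)
    (hlow : ∀ h : C → Fin N, (lowF T A h).card * (lowF T B h).card +
      (if (h x : ℕ) < T then m * (lowF T S h).card else 0) ≤
        (lowF T A' h).card * (lowF T B' h).card) :
    ∑ h : C → Fin N, rfPhi l θ T A' B' h ≤ ∑ h : C → Fin N, rfPhi l θ T A B h := by
  refine rf_step hT hTN S x hxS _ _ (m * l) (m * θ) hm (by positivity)
    (fun h => (Real.exp_pos _).le) ?_ ?_
  · intro h v
    unfold rfPhi
    rw [rf_low_update A x hxA, rf_low_update B x hxB, rf_coll_update A B x hxA hxB]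
  · intro h
    have hT' : (0:ℝ) < T := by exact_mod_cast hT
    have h1 := hcoll h
    have h2 := hlow h
    have h1' : ((collF T A' B' h).card : ℝ) ≤ (collF T A B h).card +
      if (h x : ℕ) < T ∧ ∃ s ∈ S, h s = h x then (m : ℝ) else 0 := by exact_mod_cast h1
    have h2' : ((lowF T A h).card * (lowF T B h).card : ℝ) +
      (if (h x : ℕ) < T then (m * (lowF T S h).card : ℝ) else 0) ≤
        (lowF T A' h).card * (lowF T B' h).card := by exact_mod_cast h2
    have h3 := mul_le_mul_of_nonneg_left h1' hl
    have h4 : θ * (((lowF T A h).card * (lowF T B h).card : ℝ) +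
      (if (h x : ℕ) < T then (m * (lowF T S h).card : ℝ) else 0)) / T ≤
        θ * ((lowF T A' h).card * (lowF T B' h).card) / T := by gcongr
    unfold rfPhi
    by_cases hx : (h x : ℕ) < T
    · simp only [hx, true_and, if_true] at h3 h4 ⊢
      rw [← Real.exp_add]
      apply Real.exp_le_exp.2
      rw [mul_add, add_div] at h4
      split_ifs at h3 ⊢ <;> ring_nf at h3 h4 ⊢ <;> linarith
    · simp only [hx, false_and, if_false, add_zero, mul_one] at h3 h4 ⊢
      apply Real.exp_le_exp.2
      linarith

theorem rf_coll1 {C : Type*} [DecidableEq C] {N T : ℕ} (D : Finset C) (x : C)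
    (h : C → Fin N) : (collF T (insert x D) (insert x D) h).card ≤ (collF T D D h).card +
      if (h x : ℕ) < T ∧ ∃ s ∈ D, h s = h x then 2 else 0 := by
  split_ifs with hc
  · obtain ⟨hlt, s, hs, hsx⟩ := hc
    have : collF T (insert x D) (insert x D) h ⊆ collF T D D h ∪ {x, s} := by
      intro c
      simp only [collF, Finset.mem_filter, Finset.mem_erase, Finset.mem_union, Finset.mem_insert,
        Finset.mem_singleton]
      rintro ⟨hc, h1, b, ⟨hbc, hb⟩, h2⟩
      by_cases hcx : c = x
      · tauto
      by_cases hcs : c = s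
      · tauto
      left
      refine ⟨by tauto, h1, ?_⟩
      rcases hb with rfl | hb
      · exact ⟨s, ⟨fun e => hcs e.symm, hs⟩, hsx.trans h2⟩
      · exact ⟨b, ⟨hbc, hb⟩, h2⟩
    exact (Finset.card_le_card this).trans ((Finset.card_union_le _ _).trans
      (Nat.add_le_add_left Finset.card_le_two _))
  · rw [add_zero]
    apply Finset.card_le_card
    intro c
    simp only [collF, Finset.mem_filter, Finset.mem_erase, Finset.mem_insert]
    rintro ⟨hc', h1, b, ⟨hbc, hb⟩, h2⟩
    rcases hc' with rfl | hc'
    · exact absurd ⟨h1, b, by tauto, h2⟩ hc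
    refine ⟨hc', h1, ?_⟩
    rcases hb with rfl | hb
    · exact absurd ⟨by rw [h2]; exact h1, c, hc', h2.symm⟩ hc
    · exact ⟨b, ⟨hbc, hb⟩, h2⟩

theorem rf_coll2 {C : Type*} [DecidableEq C] {N T : ℕ} (A B : Finset C) (hAB : A ⊆ B) (x : C)
    (h : C → Fin N) : (collF T A (insert x B) h).card ≤ (collF T A B h).card +
      if (h x : ℕ) < T ∧ ∃ s ∈ A, h s = h x then 1 else 0 := by
  split_ifs with hc
  · obtain ⟨hlt, s, hs, hsx⟩ := hc
    have : collF T A (insert x B) h ⊆ collF T A B h ∪ {s} := by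
      intro c
      simp only [collF, Finset.mem_filter, Finset.mem_erase, Finset.mem_union, Finset.mem_insert,
        Finset.mem_singleton]
      rintro ⟨hc, h1, b, ⟨hbc, hb⟩, h2⟩
      by_cases hcs : c = s
      · tauto
      left
      refine ⟨by tauto, h1, ?_⟩
      rcases hb with rfl | hb
      · exact ⟨s, ⟨fun e => hcs e.symm, hAB hs⟩, hsx.trans h2⟩
      · exact ⟨b, ⟨hbc, hb⟩, h2⟩
    exact (Finset.card_le_card this).trans ((Finset.card_union_le _ _).trans
      (Nat.add_le_add_left (Finset.card_singleton _).le _))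
  · rw [add_zero]
    apply Finset.card_le_card
    intro c
    simp only [collF, Finset.mem_filter, Finset.mem_erase, Finset.mem_insert]
    rintro ⟨hc', h1, b, ⟨hbc, hb⟩, h2⟩
    refine ⟨hc', h1, ?_⟩
    rcases hb with rfl | hb
    · exact absurd ⟨by rw [h2]; exact h1, c, hc', h2.symm⟩ hc
    · exact ⟨b, ⟨hbc, hb⟩, h2⟩

theorem rf_coll3 {C : Type*} [DecidableEq C] {N T : ℕ} (A B : Finset C) (x : C)
    (h : C → Fin N) : (collF T (insert x A) B h).card ≤ (collF T A B h).card +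
      if (h x : ℕ) < T ∧ ∃ s ∈ B, h s = h x then 1 else 0 := by
  split_ifs with hc
  · have : collF T (insert x A) B h ⊆ collF T A B h ∪ {x} := by
      intro c
      simp only [collF, Finset.mem_filter, Finset.mem_erase, Finset.mem_union, Finset.mem_insert,
        Finset.mem_singleton]
      rintro ⟨rfl | hc, h1⟩
      · exact Or.inr rfl
      · exact Or.inl ⟨hc, h1⟩
    exact (Finset.card_le_card this).trans ((Finset.card_union_le _ _).trans
      (Nat.add_le_add_left (Finset.card_singleton _).le _))
  · rw [add_zero]
    apply Finset.card_le_card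
    intro c
    simp only [collF, Finset.mem_filter, Finset.mem_erase, Finset.mem_insert]
    rintro ⟨hc', h1, b, ⟨hbc, hb⟩, h2⟩
    rcases hc' with rfl | hc'
    · exact absurd ⟨h1, b, hb, h2⟩ hc
    exact ⟨hc', h1, b, ⟨hbc, hb⟩, h2⟩

theorem rf_phi {C : Type*} [Fintype C] [DecidableEq C] {N T : ℕ} (hT : 0 < T) (hTN : T ≤ N)
    (l θ : ℝ) (hl : 0 ≤ l) (hθ : 0 ≤ θ) (h1 : Real.exp l - 1 ≤ θ)
    (h2 : Real.exp (2 * l) - 1 ≤ 2 * θ) (A B : Finset C) :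
    ∑ h : C → Fin N, rfPhi l θ T A B h ≤ (Fintype.card (C → Fin N) : ℝ) := by
  have s1 : ∀ D : Finset C, ∑ h : C → Fin N, rfPhi l θ T D D h ≤
      (Fintype.card (C → Fin N) : ℝ) := by
    intro D
    induction D using Finset.induction_on with
    | empty => simp [rfPhi, collF, lowF]
    | insert x D hx ih =>
      refine le_trans ?_ ih
      refine rf_step2 hT hTN l θ hl hθ 2 (by exact_mod_cast h2) D D _ _ D x hx hx hx
        (rf_coll1 D x) ?_
      intro h
      rw [rf_low_insert D x hx]
      split_ifs <;> nlinarith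
  have s2 : ∀ D E : Finset C, Disjoint D E → ∑ h : C → Fin N, rfPhi l θ T D (D ∪ E) h ≤
      (Fintype.card (C → Fin N) : ℝ) := by
    intro D E
    induction E using Finset.induction_on with
    | empty => intro _; simpa using s1 D
    | insert x E hx ih =>
      intro hd
      rw [Finset.disjoint_insert_right] at hd
      refine le_trans ?_ (ih hd.2)
      rw [Finset.union_insert]
      have hx' : x ∉ D ∪ E := by simp [hd.1, hx]
      refine rf_step2 hT hTN l θ hl hθ 1 (by simpa using h1) D (D ∪ E) _ _ D x hd.1 hx' hd.1
        (rf_coll2 D (D ∪ E) Finset.subset_union_left x) ?_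
      intro h
      rw [rf_low_insert _ x hx']
      split_ifs <;> nlinarith
  have s3 : ∀ B D E : Finset C, D ⊆ B → Disjoint B E → Disjoint D E →
      ∑ h : C → Fin N, rfPhi l θ T (D ∪ E) B h ≤ (Fintype.card (C → Fin N) : ℝ) := by
    intro B D E hDB
    induction E using Finset.induction_on with
    | empty =>
      intro _ _
      have := s2 D (B \ D) Finset.disjoint_sdiff
      rw [Finset.union_sdiff_of_subset hDB] at this
      simpa using this
    | insert x E hx ih =>
      intro hB hd
      rw [Finset.disjoint_insert_right] at hd hB
      refine le_trans ?_ (ih hB.2 hd.2)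
      rw [Finset.union_insert]
      have hx' : x ∉ D ∪ E := by simp [hd.1, hx]
      refine rf_step2 hT hTN l θ hl hθ 1 (by simpa using h1) (D ∪ E) B _ _ B x hx' hB.1 hB.1
        (rf_coll3 (D ∪ E) B x) ?_
      intro h
      rw [rf_low_insert _ x hx']
      split_ifs <;> nlinarith
  have := s3 B (A ∩ B) (A \ B) Finset.inter_subset_right Finset.disjoint_sdiff
    (Finset.disjoint_of_subset_left Finset.inter_subset_right Finset.disjoint_sdiff)
  have e : (A ∩ B) ∪ (A \ B) = A := by
    ext c; simp only [Finset.mem_union, Finset.mem_inter, Finset.mem_sdiff]; tauto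
  rwa [e] at this

/-- joint collision tail -/
theorem rf_colltail {C : Type*} [Fintype C] [DecidableEq C] {N T : ℕ} (hT : 0 < T) (hTN : T ≤ N)
    (A B : Finset C) (M b : ℝ) (hM : 0 ≤ M) (hb : 0 < b) :
    ((Finset.univ.filter fun h : C → Fin N =>
      ((lowF T A h).card : ℝ) ≤ (1 + 1 / 4) * M ∧
      ((lowF T B h).card : ℝ) ≤ (1 + 1 / 4) * (b * T) ∧
      2 * b * M < ((collF T A B h).card : ℝ)).card : ℝ) ≤
      (Fintype.card (C → Fin N) : ℝ) * Real.exp (-(b * M / 45)) := by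
  have hT' : (0:ℝ) < T := by exact_mod_cast hT
  set l : ℝ := Real.log (1 + 7 / 25) / 2 with hl
  have hlog := Real.le_log_one_add_of_nonneg (show (0:ℝ) ≤ 7 / 25 by norm_num)
  have hl0 : 0 ≤ l := by
    have : 0 ≤ Real.log (1 + 7 / 25) := Real.log_nonneg (by norm_num)
    positivity
  have e2 : Real.exp (2 * l) = 1 + 7 / 25 := by
    rw [hl, mul_div_cancel₀ _ (by norm_num : (2:ℝ) ≠ 0), Real.exp_log (by norm_num)]
  have e1 : Real.exp l - 1 ≤ 7 / 50 := by
    rw [two_mul, Real.exp_add] at e2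
    nlinarith [Real.exp_pos l]
  have h1 := rf_phi (N := N) hT hTN l (7 / 50) hl0 (by norm_num) e1 (by rw [e2]; norm_num) A B
  unfold rfPhi at h1
  have h2 := rf_markov (fun h : C → Fin N =>
      ((lowF T A h).card : ℝ) ≤ (1 + 1 / 4) * M ∧
      ((lowF T B h).card : ℝ) ≤ (1 + 1 / 4) * (b * T) ∧
      2 * b * M < ((collF T A B h).card : ℝ)) _ (b * M / 45) _ h1 ?_
  · exact h2
  rintro h ⟨ha, hB, hc⟩
  have h3 : (7 / 50 : ℝ) * ((lowF T A h).card * (lowF T B h).card) / T ≤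
      7 / 50 * (((1 + 1 / 4) * M) * ((1 + 1 / 4) * (b * T))) / T := by gcongr
  have h4 : (7 / 50 : ℝ) * (((1 + 1 / 4) * M) * ((1 + 1 / 4) * (b * T))) / T =
    7 / 32 * (b * M) := by field_simp; ring
  have h5 : l * (2 * b * M) ≤ l * (collF T A B h).card := by gcongr
  have h6 : (2 * (7 / 25) / (7 / 25 + 2)) * (b * M) ≤ (2 * l) * (b * M) := by
    gcongr
    rw [hl]; linarith
  have h7 : 0 ≤ b * M := by positivity
  norm_num at h6
  nlinarith

end Coll

section Main

theorem rf_low_eq {C : Type*} [DecidableEq C] {N : ℕ} (T : ℕ) (A : Finset C) (h : C → Fin N) :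
    (A.filter fun c => h c ∈ (Finset.univ.filter fun v : Fin N => (v : ℕ) < T)) = lowF T A h := by
  unfold lowF
  ext c; simp

theorem rf_exp_le {ν K y : ℝ} (hν : 0 < ν) (hK : 0 < K) (h : Real.log (K / ν) ≤ y) :
    Real.exp (-y) ≤ ν / K := by
  calc Real.exp (-y) ≤ Real.exp (-Real.log (K / ν)) := Real.exp_le_exp.2 (by linarith)
    _ = ν / K := by rw [Real.exp_neg, Real.exp_log (by positivity), inv_div]

set_option maxHeartbeats 1000000 in
theorem rf_single {C : Type*} [Fintype C] [DecidableEq C]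
    (a b ν : ℝ) (ha0 : 0 < a) (hb0 : 0 < b) (hb1 : b < 1) (ha1 : a < 1)
    (hν0 : 0 < ν) (N T : ℕ) (hN : 0 < N) (hT : 0 < T) (hTN : T ≤ N)
    (hT1 : 3 * Real.log (8 / ν) ≤ b ^ 2 * (a * T)) (hT2 : 45 * Real.log (12 / ν) ≤ a * b * T)
    (A B : Finset C) (hB : (B.card : ℝ) ≤ b * N) :
    ((Finset.univ.filter fun h : C → Fin N => ¬ IsGood a b T A B h).card : ℝ) ≤
      ν / 2 * Fintype.card (C → Fin N) := by
  have : Nonempty (Fin N) := ⟨⟨0, hN⟩⟩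
  have hN' : (0:ℝ) < N := by exact_mod_cast hN
  have hT' : (0:ℝ) < T := by exact_mod_cast hT
  set S := (Finset.univ.filter fun v : Fin N => (v : ℕ) < T) with hS
  have hSc : (S.card : ℝ) = T := by rw [hS, rf_lowcard N T hTN]
  set K : ℝ := (Fintype.card (C → Fin N) : ℝ) with hK
  have hK0 : 0 ≤ K := by positivity
  set M0 : ℝ := A.card * ((T : ℝ) / N) with hM0
  set M : ℝ := max M0 (a * T) with hM
  have hMa : a * T ≤ M := le_max_right _ _
  have haT : 0 < a * T := by positivity
  have hM00 : 0 ≤ M := haT.le.trans hMa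
  have hbM : b * (a * T) ≤ b * M := by gcongr
  have hbaT : b * (a * T) ≤ a * T := by nlinarith
  have hbT0 : 0 < b * T := by positivity
  have hbaT2 : b * (a * T) ≤ b * T := by nlinarith [mul_pos hb0 hT']
  have E1 := rf_upper S A M b hb0 (by rw [hSc, Fintype.card_fin]; exact le_max_left _ _)
  have E3 := rf_upper S A M (1 / 4) (by norm_num)
    (by rw [hSc, Fintype.card_fin]; exact le_max_left _ _)
  have E4 := rf_upper S B (b * T) (1 / 4) (by norm_num)
    (by
      rw [hSc, Fintype.card_fin, mul_div_assoc', div_le_iff₀ hN']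
      nlinarith)
  have E2 := rf_lower S A M0 b hb0 (by rw [hSc, Fintype.card_fin])
  have E5 := rf_colltail (N := N) hT hTN A B M b hM00 hb0
  simp_rw [hS, rf_low_eq] at E1 E2 E3 E4
  rw [← hK] at E1 E2 E3 E4 E5
  have B1 : K * Real.exp (-(b ^ 2 / (b + 2) * M)) ≤ K * (ν / 8) := by
    gcongr
    apply rf_exp_le hν0 (by norm_num)
    have : b ^ 2 / 3 * (a * T) ≤ b ^ 2 / (b + 2) * M := by
      gcongr
      linarith
    linarith
  have B3 : K * Real.exp (-((1 / 4) ^ 2 / (1 / 4 + 2) * M)) ≤ K * (ν / 12) := by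
    gcongr
    apply rf_exp_le hν0 (by norm_num)
    rw [show ((1:ℝ) / 4) ^ 2 / (1 / 4 + 2) = 1 / 36 by norm_num]
    linarith
  have B4 : K * Real.exp (-((1 / 4) ^ 2 / (1 / 4 + 2) * (b * T))) ≤ K * (ν / 12) := by
    gcongr
    apply rf_exp_le hν0 (by norm_num)
    rw [show ((1:ℝ) / 4) ^ 2 / (1 / 4 + 2) = 1 / 36 by norm_num]
    linarith
  have B5 : K * Real.exp (-(b * M / 45)) ≤ K * (ν / 12) := by
    gcongr
    apply rf_exp_le hν0 (by norm_num)
    linarith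
  by_cases hA : a * N ≤ (A.card : ℝ)
  · have hMM : M = M0 := by
      apply max_eq_left
      rw [hM0, mul_div_assoc', le_div_iff₀ hN']
      nlinarith
    have B2 : K * Real.exp (-(b ^ 2 / 3 * M0)) ≤ K * (ν / 8) := by
      gcongr
      apply rf_exp_le hν0 (by norm_num)
      rw [← hMM]
      have : b ^ 2 / 3 * (a * T) ≤ b ^ 2 / 3 * M := by gcongr
      linarith
    have hsub : (Finset.univ.filter fun h : C → Fin N => ¬ IsGood a b T A B h) ⊆
        (Finset.univ.filter fun h : C → Fin N => (1 + b) * M < ((lowF T A h).card : ℝ)) ∪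
        ((Finset.univ.filter fun h : C → Fin N => ((lowF T A h).card : ℝ) < (1 - b) * M0) ∪
        ((Finset.univ.filter fun h : C → Fin N => (1 + 1 / 4) * M < ((lowF T A h).card : ℝ)) ∪
        ((Finset.univ.filter fun h : C → Fin N => (1 + 1 / 4) * (b * T) < ((lowF T B h).card : ℝ)) ∪
        (Finset.univ.filter fun h : C → Fin N =>
          ((lowF T A h).card : ℝ) ≤ (1 + 1 / 4) * M ∧
          ((lowF T B h).card : ℝ) ≤ (1 + 1 / 4) * (b * T) ∧
          2 * b * M < ((collF T A B h).card : ℝ))))) := by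
      intro h hh
      simp only [Finset.mem_union, Finset.mem_filter, Finset.mem_univ, true_and] at hh ⊢
      by_contra hcon
      push Not at hcon
      obtain ⟨c1, c2, c3, c4, c5⟩ := hcon
      apply hh
      have c6 := c5 c3 c4
      rw [hMM, hM0] at c1 c6
      rw [hM0] at c2
      refine ⟨fun _ => ⟨⟨?_, ?_⟩, ?_⟩, fun h' => absurd h' (not_lt.2 hA)⟩
      · refine le_of_eq_of_le ?_ c2; ring
      · refine c1.trans_eq ?_; ring
      · refine c6.trans_eq ?_; ring
    have hc : ((Finset.univ.filter fun h : C → Fin N => ¬ IsGood a b T A B h).card : ℝ) ≤ _ :=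
      Nat.cast_le.2 ((Finset.card_le_card hsub).trans ((Finset.card_union_le _ _).trans
      (Nat.add_le_add_left ((Finset.card_union_le _ _).trans
      (Nat.add_le_add_left ((Finset.card_union_le _ _).trans
      (Nat.add_le_add_left (Finset.card_union_le _ _) _)) _)) _)))
    push_cast at hc
    linarith
  · have hA' := not_le.1 hA
    have hMM : M = a * T := by
      apply max_eq_right
      rw [hM0, mul_div_assoc', div_le_iff₀ hN']
      nlinarith
    have hsub : (Finset.univ.filter fun h : C → Fin N => ¬ IsGood a b T A B h) ⊆
        (Finset.univ.filter fun h : C → Fin N => (1 + b) * M < ((lowF T A h).card : ℝ)) ∪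
        ((Finset.univ.filter fun h : C → Fin N => (1 + 1 / 4) * M < ((lowF T A h).card : ℝ)) ∪
        ((Finset.univ.filter fun h : C → Fin N => (1 + 1 / 4) * (b * T) < ((lowF T B h).card : ℝ)) ∪
        (Finset.univ.filter fun h : C → Fin N =>
          ((lowF T A h).card : ℝ) ≤ (1 + 1 / 4) * M ∧
          ((lowF T B h).card : ℝ) ≤ (1 + 1 / 4) * (b * T) ∧
          2 * b * M < ((collF T A B h).card : ℝ)))) := by
      intro h hh
      simp only [Finset.mem_union, Finset.mem_filter, Finset.mem_univ, true_and] at hh ⊢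
      by_contra hcon
      push Not at hcon
      obtain ⟨c1, c3, c4, c5⟩ := hcon
      apply hh
      have c6 := c5 c3 c4
      rw [hMM] at c1 c6
      refine ⟨fun h' => absurd h' hA, fun _ => ⟨?_, ?_⟩⟩
      · refine c1.trans_eq ?_; ring
      · refine c6.trans_eq ?_; ring
    have hc : ((Finset.univ.filter fun h : C → Fin N => ¬ IsGood a b T A B h).card : ℝ) ≤ _ :=
      Nat.cast_le.2 ((Finset.card_le_card hsub).trans ((Finset.card_union_le _ _).trans
      (Nat.add_le_add_left ((Finset.card_union_le _ _).trans
      (Nat.add_le_add_left (Finset.card_union_le _ _) _)) _)))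
    push_cast at hc
    have : 0 ≤ K * ν := by positivity
    linarith

theorem rf_count {C : Type*} [Fintype C] [DecidableEq C] (m : ℕ) :
    (Finset.univ.filter fun A : Finset C => A.card ≤ m).card ≤ (Fintype.card C + 1) ^ m := by
  have h1 : (Finset.univ.filter fun A : Finset C => A.card ≤ m) ⊆
      (Finset.univ : Finset (Fin m → Option C)).image
        (fun f => Finset.univ.filter fun c => ∃ i, f i = some c) := by
    intro A hA
    have hA := (Finset.mem_filter.1 hA).2
    rw [Finset.mem_image]
    refine ⟨fun i => A.toList[(i : ℕ)]?, Finset.mem_univ _, ?_⟩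
    ext c
    simp only [Finset.mem_filter, Finset.mem_univ, true_and]
    rw [← Finset.mem_toList, List.mem_iff_getElem?]
    constructor
    · rintro ⟨i, hi⟩; exact ⟨i, hi⟩
    · rintro ⟨i, hi⟩
      have : i < A.toList.length := (List.getElem?_eq_some_iff.1 hi).1
      rw [Finset.length_toList] at this
      exact ⟨⟨i, by omega⟩, hi⟩
  refine (Finset.card_le_card h1).trans (Finset.card_image_le.trans ?_)
  simp

end Main

/-- Existence of a representative family of hash functions: for every `F` large enough,
there are `F` functions `h₁,…,h_F : C → {1,…,N}` such that for every pair of small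
enough subsets `A, B ⊆ C`, at least `(1−ν)·F` of the functions are `(A,B)`-good. -/
theorem stmt6 {C : Type*} [Fintype C] [DecidableEq C] (hC : 2 ≤ Fintype.card C)
    (a b ν : ℝ) (ha0 : 0 < a) (ha1 : a < 1) (hb0 : 0 < b) (hb1 : b < 1)
    (hν0 : 0 < ν) (hν1 : ν < 1) (hab : a ≤ b)
    (N T : ℕ) (hN : 0 < N) (hT : 0 < T) (hTN : T ≤ N)
    (hTlb : max (3 * b⁻¹ ^ 2 * a⁻¹ * Real.log (8 / ν))
        (45 * a⁻¹ * b⁻¹ * Real.log (12 / ν)) ≤ (T : ℝ))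
    (F : ℕ) (hF : 24 * b * N * Real.log (Fintype.card C) / ν < (F : ℝ)) :
    ∃ h : Fin F → C → Fin N,
      ∀ A B : Finset C, (A.card : ℝ) ≤ b * N → (B.card : ℝ) ≤ b * N →
        (1 - ν) * F ≤
          ((Finset.univ.filter fun i : Fin F => IsGood a b T A B (h i)).card : ℝ) := by
  have : Nonempty (Fin N) := ⟨⟨0, hN⟩⟩
  have hT' : (0:ℝ) < T := by exact_mod_cast hT
  have hT1 : 3 * Real.log (8 / ν) ≤ b ^ 2 * (a * T) := by
    have h1 := (le_max_left _ _).trans hTlb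
    calc 3 * Real.log (8 / ν) = b ^ 2 * a * (3 * b⁻¹ ^ 2 * a⁻¹ * Real.log (8 / ν)) := by
          field_simp
      _ ≤ b ^ 2 * a * T := by gcongr
      _ = _ := by ring
  have hT2 : 45 * Real.log (12 / ν) ≤ a * b * T := by
    have h1 := (le_max_right _ _).trans hTlb
    calc 45 * Real.log (12 / ν) = a * b * (45 * a⁻¹ * b⁻¹ * Real.log (12 / ν)) := by
          field_simp
      _ ≤ a * b * T := by gcongr
  set m : ℕ := ⌊b * N⌋₊ with hm
  have hmle : (m : ℝ) ≤ b * N := Nat.floor_le (by positivity)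
  let Sm : Finset (Finset C) := Finset.univ.filter fun A : Finset C => A.card ≤ m
  let Bd : Finset C × Finset C → Finset (C → Fin N) := fun p =>
    Finset.univ.filter fun h => ¬ IsGood a b T p.1 p.2 h
  let Ev : Finset C × Finset C → Finset (Fin F → C → Fin N) := fun p =>
    Finset.univ.filter fun H => (1 + 1) * (ν / 2 * F) <
      (((Finset.univ : Finset (Fin F)).filter fun i => H i ∈ Bd p).card : ℝ)
  set Q : ℝ := (Fintype.card (Fin F → C → Fin N) : ℝ) with hQ
  have hQ0 : 0 < Q := by rw [hQ]; exact_mod_cast Fintype.card_pos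
  have hEv : ∀ p ∈ Sm ×ˢ Sm, ((Ev p).card : ℝ) ≤ Q * Real.exp (-(ν * F / 6)) := by
    rintro ⟨A, B⟩ hp
    have hB : B.card ≤ m := (Finset.mem_filter.1 (Finset.mem_product.1 hp).2).2
    have hB' : (B.card : ℝ) ≤ b * N := le_trans (by exact_mod_cast hB) hmle
    have h1 := rf_single a b ν ha0 hb0 hb1 ha1 hν0 N T hN hT hTN hT1 hT2 A B hB'
    have hΩ : (0:ℝ) < Fintype.card (C → Fin N) := by exact_mod_cast Fintype.card_pos
    have h2 := rf_upper (ι := Fin F) (Bd (A, B)) Finset.univ (ν / 2 * F) 1 (by norm_num) (by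
      rw [Finset.card_univ, Fintype.card_fin, mul_comm]
      refine mul_le_mul_of_nonneg_right ?_ (Nat.cast_nonneg _)
      rw [div_le_iff₀ hΩ]
      exact h1)
    refine le_trans (le_trans (le_of_eq ?_) h2) (le_of_eq ?_)
    · rfl
    · rw [hQ]; congr 2; ring
  have hcount : ((Sm ×ˢ Sm).card : ℝ) ≤ Real.exp (4 * (b * N) * Real.log (Fintype.card C)) := by
    have hn : (2:ℝ) ≤ Fintype.card C := by exact_mod_cast hC
    have hlog : 0 ≤ Real.log (Fintype.card C) := Real.log_nonneg (by linarith)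
    have h1 : (Sm.card : ℝ) ≤ ((Fintype.card C : ℝ) ^ 2) ^ m := by
      have h := rf_count (C := C) m
      calc (Sm.card : ℝ) ≤ ((Fintype.card C : ℝ) + 1) ^ m := by exact_mod_cast h
        _ ≤ _ := by gcongr; nlinarith
    rw [Finset.card_product]
    push_cast
    calc (Sm.card : ℝ) * Sm.card ≤ ((Fintype.card C : ℝ) ^ 2) ^ m * ((Fintype.card C : ℝ) ^ 2) ^ m := by
          gcongr
      _ = (Fintype.card C : ℝ) ^ (4 * m) := by rw [← pow_mul, ← pow_add]; congr 1; ring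
      _ = Real.exp (4 * m * Real.log (Fintype.card C)) := by
          rw [← Real.exp_log (show (0:ℝ) < (Fintype.card C : ℝ) ^ (4 * m) by positivity),
            Real.log_pow]
          push_cast; rfl
      _ ≤ _ := by gcongr
  have hlt : ((Sm ×ˢ Sm).card : ℝ) * Real.exp (-(ν * F / 6)) < 1 := by
    rw [div_lt_iff₀ hν0] at hF
    calc ((Sm ×ˢ Sm).card : ℝ) * Real.exp (-(ν * F / 6))
        ≤ Real.exp (4 * (b * N) * Real.log (Fintype.card C)) * Real.exp (-(ν * F / 6)) := by gcongr
      _ = Real.exp (4 * (b * N) * Real.log (Fintype.card C) + -(ν * F / 6)) := by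
          rw [Real.exp_add]
      _ < 1 := by rw [Real.exp_lt_one_iff]; linarith
  have hU : ∃ H : Fin F → C → Fin N, H ∉ (Sm ×ˢ Sm).biUnion Ev := by
    by_contra hcon
    push Not at hcon
    have h1 : (Sm ×ˢ Sm).biUnion Ev = Finset.univ := Finset.eq_univ_iff_forall.2 hcon
    have h2 : Q ≤ ∑ p ∈ Sm ×ˢ Sm, ((Ev p).card : ℝ) := by
      have : ((Sm ×ˢ Sm).biUnion Ev).card ≤ ∑ p ∈ Sm ×ˢ Sm, (Ev p).card := Finset.card_biUnion_le
      rw [h1, Finset.card_univ] at this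
      rw [hQ]
      exact_mod_cast this
    have h3 := h2.trans (Finset.sum_le_sum hEv)
    rw [Finset.sum_const, nsmul_eq_mul] at h3
    nlinarith
  obtain ⟨H, hH⟩ := hU
  refine ⟨H, fun A B hA hB => ?_⟩
  have hp : (A, B) ∈ Sm ×ˢ Sm := by
    rw [Finset.mem_product]
    exact ⟨Finset.mem_filter.2 ⟨Finset.mem_univ _, Nat.le_floor hA⟩,
      Finset.mem_filter.2 ⟨Finset.mem_univ _, Nat.le_floor hB⟩⟩
  have h1 : H ∉ Ev (A, B) := fun h => hH (Finset.mem_biUnion.2 ⟨_, hp, h⟩)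
  have h2 : (((Finset.univ : Finset (Fin F)).filter fun i => ¬ IsGood a b T A B (H i)).card : ℝ)
      ≤ (1 + 1) * (ν / 2 * F) := by
    have h3 : ¬ ((1 + 1) * (ν / 2 * F) <
      (((Finset.univ : Finset (Fin F)).filter fun i => H i ∈ Bd (A, B)).card : ℝ)) :=
      fun h => h1 (Finset.mem_filter.2 ⟨Finset.mem_univ _, h⟩)
    have h4 : ((Finset.univ : Finset (Fin F)).filter fun i => H i ∈ Bd (A, B)) =
      ((Finset.univ : Finset (Fin F)).filter fun i => ¬ IsGood a b T A B (H i)) := by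
      ext i; simp [Bd]
    rw [h4] at h3
    exact not_lt.1 h3
  have h5 := Finset.card_filter_add_card_filter_not (s := (Finset.univ : Finset (Fin F)))
    (fun i => IsGood a b T A B (H i))
  rw [Finset.card_univ, Fintype.card_fin] at h5
  have h6 : (((Finset.univ : Finset (Fin F)).filter fun i => IsGood a b T A B (H i)).card : ℝ) +
    (((Finset.univ : Finset (Fin F)).filter fun i => ¬ IsGood a b T A B (H i)).card : ℝ) = F := by
    exact_mod_cast h5
  linarith
end

section
/- Let C be a finite set, N a positive integer, h : C → {1,…,N} a function, and T ≤ N a threshold. For subsets S_u, S_v ⊆ C, write I = S_u ∩ S_v, U = S_u ∪ S_v, T_u = Hit^{≤T}(S_u,h,S_u), and T_v = Hit^{≤T}(S_v,h,S_v). Then |h(T_u) ∩ h(T_v)| ≤ |I|_h^{≤T}| + |h(Coll^{≤T}(U,h,U))|. -/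
/-- `A|_h^{≤T}`: elements of `A` hashing (through `h : C → {1,…,N}`) to a value in `{1,…,T}`. -/
def lowSet {α : Type*} [DecidableEq α] (h : α → ℕ) (T : ℕ) (A : Finset α) : Finset α :=
  A.filter fun c => 1 ≤ h c ∧ h c ≤ T

/-- `Coll^{≤T}(A,h,B)`: elements of `A` hashing to a value in `{1,…,T}` that collide with
a distinct element of `B`. -/
def collSet {α : Type*} [DecidableEq α] (h : α → ℕ) (T : ℕ) (A B : Finset α) : Finset α :=
  A.filter fun c => (1 ≤ h c ∧ h c ≤ T) ∧ ∃ b ∈ B.erase c, h b = h c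

/-- `Hit^{≤T}(A,h,B) = A|_h^{≤T} \ Coll^{≤T}(A,h,B)`. -/
def hitSet {α : Type*} [DecidableEq α] (h : α → ℕ) (T : ℕ) (A B : Finset α) : Finset α :=
  lowSet h T A \ collSet h T A B

theorem stmt9 {α : Type*} [Fintype α] [DecidableEq α] (N T : ℕ) (hN : 0 < N) (hTN : T ≤ N)
    (h : α → ℕ) (hrange : ∀ x, 1 ≤ h x ∧ h x ≤ N) (Su Sv : Finset α) :
    ((hitSet h T Su Su).image h ∩ (hitSet h T Sv Sv).image h).card
      ≤ (lowSet h T (Su ∩ Sv)).card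
        + ((collSet h T (Su ∪ Sv) (Su ∪ Sv)).image h).card := by
  have hsub : (hitSet h T Su Su).image h ∩ (hitSet h T Sv Sv).image h ⊆
      (lowSet h T (Su ∩ Sv)).image h ∪ (collSet h T (Su ∪ Sv) (Su ∪ Sv)).image h := by
    intro y hy
    rw [Finset.mem_inter, Finset.mem_image, Finset.mem_image] at hy
    obtain ⟨⟨a, ha, hay⟩, b, hb, hby⟩ := hy
    have ha1 := (Finset.mem_sdiff.mp ha).1
    have hb1 := (Finset.mem_sdiff.mp hb).1
    simp only [lowSet, Finset.mem_filter] at ha1 hb1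
    rw [Finset.mem_union, Finset.mem_image, Finset.mem_image]
    by_cases hab : a = b
    · subst hab
      left
      refine ⟨a, ?_, hay⟩
      simp only [lowSet, Finset.mem_filter, Finset.mem_inter]
      exact ⟨⟨ha1.1, hb1.1⟩, ha1.2⟩
    · right
      refine ⟨a, ?_, hay⟩
      simp only [collSet, Finset.mem_filter, Finset.mem_union, Finset.mem_erase]
      exact ⟨Or.inl ha1.1, ha1.2, b, ⟨Ne.symm hab, Or.inr hb1.1⟩, hby.trans hay.symm⟩
  calc _ ≤ _ := Finset.card_le_card hsub
    _ ≤ _ := Finset.card_union_le _ _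
    _ ≤ _ := Nat.add_le_add_right Finset.card_image_le _
end

section
/- Let C be a finite set, ε ∈ (0,1), N and T positive integers with T ≤ N, and h : C → {1,…,N} a function. Let S_u, S_v ⊆ C, write I = S_u ∩ S_v, U = S_u ∪ S_v, M = max(|S_u|,|S_v|), T_u = Hit^{≤T}(S_u,h,S_u), and T_v = Hit^{≤T}(S_v,h,S_v). Suppose h satisfies: (i) (1−ε/4)·T|I|/N ≤ |I|_h^{≤T}| ≤ (1+ε/4)·T|I|/N; (ii) |Coll^{≤T}(I,h,U)| ≤ (ε/2)·T|I|/N; and (iii) |Coll^{≤T}(U,h,U)| ≤ (ε/2)·T|U|/N. Then the estimate |h(T_u) ∩ h(T_v)|·N/T differs from |I| = |S_u ∩ S_v| by at most ε·M. -/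
/-- Deterministic core of EstimateSimilarity: if the hash function behaves well on the
intersection and union of `S_u` and `S_v`, then `|h(T_u) ∩ h(T_v)|·N/T` estimates
`|S_u ∩ S_v|` within `ε·max(|S_u|,|S_v|)`. -/
theorem stmt10 {α : Type*} [Fintype α] [DecidableEq α] (ε : ℝ) (hε0 : 0 < ε) (hε1 : ε < 1)
    (N T : ℕ) (hN : 0 < N) (hT : 0 < T) (hTN : T ≤ N)
    (h : α → ℕ) (hrange : ∀ x, 1 ≤ h x ∧ h x ≤ N) (Su Sv : Finset α)
    (hi₁ : (1 - ε / 4) * T * ((Su ∩ Sv).card : ℝ) / N ≤ ((lowSet h T (Su ∩ Sv)).card : ℝ))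
    (hi₂ : ((lowSet h T (Su ∩ Sv)).card : ℝ) ≤ (1 + ε / 4) * T * ((Su ∩ Sv).card : ℝ) / N)
    (hii : ((collSet h T (Su ∩ Sv) (Su ∪ Sv)).card : ℝ)
        ≤ (ε / 2) * T * ((Su ∩ Sv).card : ℝ) / N)
    (hiii : ((collSet h T (Su ∪ Sv) (Su ∪ Sv)).card : ℝ)
        ≤ (ε / 2) * T * ((Su ∪ Sv).card : ℝ) / N) :
    |(((hitSet h T Su Su).image h ∩ (hitSet h T Sv Sv).image h).card : ℝ) * N / T
        - ((Su ∩ Sv).card : ℝ)|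
      ≤ ε * max (Su.card : ℝ) (Sv.card : ℝ) := by
  have hup : ((hitSet h T Su Su).image h ∩ (hitSet h T Sv Sv).image h).card
      ≤ (lowSet h T (Su ∩ Sv)).card + (collSet h T (Su ∪ Sv) (Su ∪ Sv)).card := by
    refine le_trans (Finset.card_le_card (t := (lowSet h T (Su ∩ Sv) ∪
      collSet h T (Su ∪ Sv) (Su ∪ Sv)).image h) ?_)
      (Finset.card_image_le.trans (Finset.card_union_le _ _))
    intro y hy
    simp only [Finset.mem_inter, Finset.mem_image, hitSet, lowSet, Finset.mem_sdiff,
      Finset.mem_filter] at hy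
    obtain ⟨⟨a, ⟨⟨ha, hal⟩, -⟩, hay⟩, b, ⟨⟨hb, hbl⟩, -⟩, hby⟩ := hy
    refine Finset.mem_image.2 ⟨a, ?_, hay⟩
    simp only [Finset.mem_union, lowSet, collSet, Finset.mem_filter, Finset.mem_inter,
      Finset.mem_erase]
    by_cases hab : a = b
    · subst hab
      exact Or.inl ⟨⟨ha, hb⟩, hal⟩
    · exact Or.inr ⟨Or.inl ha, hal, b, ⟨fun e => hab e.symm, Or.inr hb⟩, hby.trans hay.symm⟩
  have hlo : (lowSet h T (Su ∩ Sv)).card ≤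
      ((hitSet h T Su Su).image h ∩ (hitSet h T Sv Sv).image h).card
        + (collSet h T (Su ∩ Sv) (Su ∪ Sv)).card := by
    have h1 : (lowSet h T (Su ∩ Sv) \ collSet h T (Su ∩ Sv) (Su ∪ Sv)).card ≤
        ((hitSet h T Su Su).image h ∩ (hitSet h T Sv Sv).image h).card := by
      apply Finset.card_le_card_of_injOn h
      · intro c hc
        simp only [Finset.coe_sdiff, Set.mem_diff, Finset.mem_coe, lowSet, collSet,
          Finset.mem_filter, Finset.mem_inter, Finset.mem_union, Finset.mem_erase] at hc
        obtain ⟨⟨⟨hu, hv⟩, hl⟩, hn⟩ := hc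
        simp only [Finset.mem_coe, Finset.mem_inter]
        constructor <;> refine Finset.mem_image_of_mem h ?_ <;>
          simp only [hitSet, lowSet, collSet, Finset.mem_sdiff, Finset.mem_filter,
            Finset.mem_erase]
        · exact ⟨⟨hu, hl⟩, fun ⟨_, _, b, ⟨hb1, hb2⟩, hb3⟩ =>
            hn ⟨⟨hu, hv⟩, hl, b, ⟨hb1, Or.inl hb2⟩, hb3⟩⟩
        · exact ⟨⟨hv, hl⟩, fun ⟨_, _, b, ⟨hb1, hb2⟩, hb3⟩ =>
            hn ⟨⟨hu, hv⟩, hl, b, ⟨hb1, Or.inr hb2⟩, hb3⟩⟩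
      · intro c hc d hd hcd
        simp only [Finset.coe_sdiff, Set.mem_diff, Finset.mem_coe, lowSet, collSet,
          Finset.mem_filter, Finset.mem_inter, Finset.mem_union, Finset.mem_erase] at hc hd
        by_contra hne
        exact hc.2 ⟨hc.1.1, hc.1.2, d, ⟨fun e => hne e.symm, Or.inl hd.1.1.1⟩, hcd.symm⟩
    have h2 := Finset.le_card_sdiff (collSet h T (Su ∩ Sv) (Su ∪ Sv)) (lowSet h T (Su ∩ Sv))
    omega
  have hU := Finset.card_union_add_card_inter Su Sv
  have hIle : (Su ∩ Sv).card ≤ Su.card := Finset.card_le_card Finset.inter_subset_left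
  generalize ((hitSet h T Su Su).image h ∩ (hitSet h T Sv Sv).image h).card = X at *
  generalize (lowSet h T (Su ∩ Sv)).card = L at *
  generalize (collSet h T (Su ∩ Sv) (Su ∪ Sv)).card = K at *
  generalize (collSet h T (Su ∪ Sv) (Su ∪ Sv)).card = K' at *
  generalize (Su ∩ Sv).card = I at *
  generalize (Su ∪ Sv).card = U at *
  have hup' : (X : ℝ) ≤ L + K' := by exact_mod_cast hup
  have hlo' : (L : ℝ) ≤ X + K := by exact_mod_cast hlo
  have hU' : (U : ℝ) + I = Su.card + Sv.card := by exact_mod_cast hU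
  have hI' : (I : ℝ) ≤ Su.card := by exact_mod_cast hIle
  have hI0 : (0 : ℝ) ≤ I := Nat.cast_nonneg _
  have m1 := le_max_left (Su.card : ℝ) (Sv.card : ℝ)
  have m2 := le_max_right (Su.card : ℝ) (Sv.card : ℝ)
  generalize max (Su.card : ℝ) (Sv.card : ℝ) = M at *
  have hN' : (0 : ℝ) < N := by exact_mod_cast hN
  have hT' : (0 : ℝ) < T := by exact_mod_cast hT
  have e : ∀ a b : ℝ, a * T * b / N = (a * b) * (T / N) := fun a b => by ring
  rw [e] at hi₁ hi₂ hii hiii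
  have hr : (0 : ℝ) < T / N := by positivity
  have eX : (X : ℝ) * N / T = X / (T / N) := by field_simp
  rw [eX]
  generalize (T : ℝ) / N = r at *
  have u1 : (X : ℝ) / r ≤ (1 + ε / 4) * I + ε / 2 * U := by
    rw [div_le_iff₀ hr]; linarith
  have l1 : (1 - ε / 4) * I - ε / 2 * I ≤ (X : ℝ) / r := by
    rw [le_div_iff₀ hr]; linarith
  have hUM : ε * U ≤ ε * (2 * M - I) := mul_le_mul_of_nonneg_left (by linarith) hε0.le
  have hIM : ε * I ≤ ε * M := mul_le_mul_of_nonneg_left (by linarith) hε0.le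
  have hεI : 0 ≤ ε * I := by positivity
  rw [abs_le]
  constructor <;> linarith
end

section
/- Let C be a finite set, let pal ⊆ C be nonempty, and let Y ⊆ C satisfy |Y| ≤ |pal|/2. Set P = pal ∪ Y, T_v = pal \ Y, N = 6·|pal|, and let T ≤ N be a positive threshold and h : C → {1,…,N} a function. If |Hit^{≤T}(pal,h,pal)| ≤ (4/3)·T·|pal|/N and |Hit^{≤T}(T_v,h,P)| ≥ (1/3)·T·|T_v|/N, then Hit^{≤T}(T_v,h,P) ⊆ Hit^{≤T}(pal,h,pal) and |Hit^{≤T}(T_v,h,P)| ≥ (1/8)·|Hit^{≤T}(pal,h,pal)|. -/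
/-- Deterministic core of the MultiTrial analysis. -/
theorem stmt15 {α : Type*} [Fintype α] [DecidableEq α] (pal Y : Finset α)
    (hpal : pal.Nonempty) (hY : (Y.card : ℝ) ≤ (pal.card : ℝ) / 2)
    (N T : ℕ) (hN : N = 6 * pal.card) (hT : 0 < T) (hTN : T ≤ N)
    (h : α → ℕ) (hrange : ∀ x, 1 ≤ h x ∧ h x ≤ N)
    (h1 : ((hitSet h T pal pal).card : ℝ) ≤ (4 / 3) * T * (pal.card : ℝ) / N)
    (h2 : (1 / 3 : ℝ) * T * ((pal \ Y).card : ℝ) / N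
        ≤ ((hitSet h T (pal \ Y) (pal ∪ Y)).card : ℝ)) :
    hitSet h T (pal \ Y) (pal ∪ Y) ⊆ hitSet h T pal pal ∧
      (1 / 8 : ℝ) * ((hitSet h T pal pal).card : ℝ)
        ≤ ((hitSet h T (pal \ Y) (pal ∪ Y)).card : ℝ) := by
  constructor
  · intro c hc
    simp only [hitSet, lowSet, collSet, Finset.mem_sdiff, Finset.mem_filter, Finset.mem_erase,
      Finset.mem_union, not_and, not_exists] at hc ⊢
    obtain ⟨⟨⟨hcp, hcY⟩, hr⟩, hn⟩ := hc
    exact ⟨⟨hcp, hr⟩, fun _ _ b hb => hn ⟨hcp, hcY⟩ hr b ⟨hb.1, Or.inl hb.2⟩⟩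
  · have hcard : (pal.card : ℝ) ≤ (pal \ Y).card + Y.card := by
      have := Finset.card_le_card_sdiff_add_card (s := pal) (t := Y)
      exact_mod_cast this
    have hd : (pal.card : ℝ) / 2 ≤ (pal \ Y).card := by linarith
    have key : (1 / 3 : ℝ) * T * ((pal.card : ℝ) / 2) / N
        ≤ (1 / 3 : ℝ) * T * ((pal \ Y).card : ℝ) / N := by gcongr
    have e : (1 / 3 : ℝ) * T * ((pal.card : ℝ) / 2) / N
        = (1 / 8) * ((4 / 3) * T * (pal.card : ℝ) / N) := by ring
    linarith
end
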